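/- arXiv:math/0501416 — 3 statements merged into one kernel-verified Lean document; each statement's English description precedes it below -/
import Mathlib

section
/- Let A and B be lattices with a least element. Then the order dual of A ⊠ B is order-isomorphic to the box product Aᵈ □ Bᵈ of the order duals Aᵈ and Bᵈ of A and B. -/
/-!
The relation `a ≤ x ∨ b ≤ y` between pairs `(a, b)` of `A × B` and pairs `(x, y)` of
`Aᵒᵈ × Bᵒᵈ` says both `(a, b) ∈ x □ y` and `(x, y) ∈ a □ b` (the latter box taken in the duals).
It induces an antitone Galois connection `H ↦ polar H`, `K ↦ dualPolar K` between subsets of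
`A × B` and subsets of `Aᵒᵈ × Bᵒᵈ`. Intersections of boxes are closed on either side, so the
isomorphism follows once the polars exchange `A ⊠ B` and `Aᵒᵈ □ Bᵒᵈ`.

* If `H = ⋂ i ∈ F, aᵢ □ bᵢ ⊆ a ⊠ b`, then up to pairs with a bottom component, which lie in every
  box, `H` is the union over `X ⊆ F` of the rectangles `{x ≤ c X, y ≤ d X}` with
  `c X = a ⊓ ⨅ i ∈ X, aᵢ` and `d X = b ⊓ ⨅ i ∈ F \ X, bᵢ`; hence `polar H` is the finite
  intersection of the dual boxes `c X □ d X` (`polar_mem`).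
* If `K = ⋂ i ∈ F, cᵢ □ dᵢ` in the duals, then `K` is the union over `X ⊆ F` of the rectangles
  `{⨆ i ∈ X, cᵢ ≤ x, ⨆ i ∈ F \ X, dᵢ ≤ y}`, so `dualPolar K` is the finite intersection of the
  boxes `(⨆ i ∈ X, cᵢ) □ (⨆ i ∈ F \ X, dᵢ)`; the terms `X = F` and `X = ∅` confine it
  (`dualPolar_mem`).
-/

section Defs

variable (A B : Type*) [Lattice A] [Lattice B]

/-- `a □ b = {(x,y) : x ≤ a or y ≤ b}`. -/
def boxe (a : A) (b : B) : Set (A × B) := {p | p.1 ≤ a ∨ p.2 ≤ b}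

/-- The box product `A □ B`: all finite nonempty intersections `⋂ (aᵢ □ bᵢ)`. -/
def boxProd : Set (Set (A × B)) :=
  {H | ∃ F : Finset (A × B), F.Nonempty ∧ H = ⋂ p ∈ F, boxe A B p.1 p.2}

/-- `⊥_{A,B} = (A × ⊥_B) ∪ (⊥_A × B)`, where `⊥_L` is `{0_L}` if `L` has a least
element `0_L` and `∅` otherwise. -/
def botPairs : Set (A × B) := {p | IsBot p.1 ∨ IsBot p.2}

/-- `a ⊠ b = {(x,y) : x ≤ a and y ≤ b} ∪ ⊥_{A,B}`. -/
def btimes (a : A) (b : B) : Set (A × B) := {p | p.1 ≤ a ∧ p.2 ≤ b} ∪ botPairs A B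

/-- The lattice tensor product `A ⊠ B`: the confined elements of `A □ B`. -/
def ltens : Set (Set (A × B)) :=
  {H | H ∈ boxProd A B ∧ ∃ (a : A) (b : B), H ⊆ btimes A B a b}

end Defs

open OrderDual

section Polars

variable {A B : Type*} [Lattice A] [Lattice B]

/-- The pairs `(x, y)`, viewed in the order duals, such that `H ⊆ x □ y`. -/
def polar (H : Set (A × B)) : Set (Aᵒᵈ × Bᵒᵈ) :=
  {q | ∀ p ∈ H, p.1 ≤ ofDual q.1 ∨ p.2 ≤ ofDual q.2}

/-- The pairs `(a, b)` such that `K` is contained in the box `a □ b` of the order duals. -/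
def dualPolar (K : Set (Aᵒᵈ × Bᵒᵈ)) : Set (A × B) :=
  {p | ∀ q ∈ K, p.1 ≤ ofDual q.1 ∨ p.2 ≤ ofDual q.2}

lemma dualPolar_polar {H : Set (A × B)} (hH : H ∈ boxProd A B) : dualPolar (polar H) = H := by
  obtain ⟨F, -, rfl⟩ := hH
  refine Set.Subset.antisymm (fun p hp => ?_) (fun p hp q hq => hq p hp)
  simp only [Set.mem_iInter]
  intro r hr
  refine hp (toDual r.1, toDual r.2) (fun s hs => ?_)
  simp only [Set.mem_iInter] at hs
  exact hs r hr

lemma polar_dualPolar {K : Set (Aᵒᵈ × Bᵒᵈ)} (hK : K ∈ boxProd Aᵒᵈ Bᵒᵈ) :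
    polar (dualPolar K) = K := by
  obtain ⟨F, -, rfl⟩ := hK
  refine Set.Subset.antisymm (fun p hp => ?_) (fun p hp q hq => hq p hp)
  simp only [Set.mem_iInter]
  intro r hr
  refine hp (ofDual r.1, ofDual r.2) (fun s hs => ?_)
  simp only [Set.mem_iInter] at hs
  exact hs r hr

lemma polar_mem {H : Set (A × B)} (hH : H ∈ ltens A B) :
    polar H ∈ boxProd Aᵒᵈ Bᵒᵈ := by
  classical
  obtain ⟨⟨F, -, rfl⟩, a, b, hab⟩ := hH
  -- `c X` and `d X` are the meets over `X`, bounded by `a` and `b`.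
  obtain ⟨c, hc⟩ : ∃ c : Finset (A × B) → A, ∀ X x, x ≤ c X ↔ x ≤ a ∧ ∀ p ∈ X, x ≤ p.1 := by
    refine ⟨fun X => (insert a (X.image Prod.fst)).inf' (by simp) id, fun X x => ?_⟩
    rw [Finset.le_inf'_iff, Finset.forall_mem_insert, Finset.forall_mem_image]
    rfl
  obtain ⟨d, hd⟩ : ∃ d : Finset (A × B) → B, ∀ X y, y ≤ d X ↔ y ≤ b ∧ ∀ p ∈ X, y ≤ p.2 := by
    refine ⟨fun X => (insert b (X.image Prod.snd)).inf' (by simp) id, fun X y => ?_⟩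
    rw [Finset.le_inf'_iff, Finset.forall_mem_insert, Finset.forall_mem_image]
    rfl
  refine ⟨F.powerset.image fun X => (toDual (c X), toDual (d (F \ X))),
    (Finset.powerset_nonempty F).image _, Set.ext fun q => ?_⟩
  simp only [Set.mem_iInter, Finset.forall_mem_image, Finset.mem_powerset]
  constructor
  · intro hq X _
    refine hq (c X, d (F \ X)) ?_
    simp only [Set.mem_iInter]
    intro p hp
    by_cases hpX : p ∈ X
    · exact Or.inl (((hc X _).1 le_rfl).2 p hpX)
    · exact Or.inr (((hd (F \ X) _).1 le_rfl).2 p (Finset.mem_sdiff.2 ⟨hp, hpX⟩))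
  · intro hq p hp
    have hpF : ∀ r ∈ F, p.1 ≤ r.1 ∨ p.2 ≤ r.2 := by
      simp only [Set.mem_iInter] at hp
      exact hp
    rcases hab hp with ⟨h1, h2⟩ | h | h
    · have h1' : p.1 ≤ c (F.filter fun r => p.1 ≤ r.1) :=
        (hc _ _).2 ⟨h1, fun r hr => (Finset.mem_filter.1 hr).2⟩
      have h2' : p.2 ≤ d (F \ F.filter fun r => p.1 ≤ r.1) :=
        (hd _ _).2 ⟨h2, fun r hr => by
          rw [Finset.mem_sdiff, Finset.mem_filter] at hr
          exact (hpF r hr.1).resolve_left fun h => hr.2 ⟨hr.1, h⟩⟩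
      have hbox : c (F.filter fun r => p.1 ≤ r.1) ≤ ofDual q.1 ∨
          d (F \ F.filter fun r => p.1 ≤ r.1) ≤ ofDual q.2 :=
        hq (Finset.filter_subset (fun r => p.1 ≤ r.1) F)
      exact hbox.imp h1'.trans h2'.trans
    · exact Or.inl (h _)
    · exact Or.inr (h _)

lemma dualPolar_mem [OrderBot A] [OrderBot B] {K : Set (Aᵒᵈ × Bᵒᵈ)}
    (hK : K ∈ boxProd Aᵒᵈ Bᵒᵈ) : dualPolar K ∈ ltens A B := by
  classical
  obtain ⟨F, -, rfl⟩ := hK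
  let c : Finset (Aᵒᵈ × Bᵒᵈ) → A := fun X => X.sup fun p => ofDual p.1
  let d : Finset (Aᵒᵈ × Bᵒᵈ) → B := fun X => X.sup fun p => ofDual p.2
  have key : ∀ p : A × B, p ∈ dualPolar (⋂ r ∈ F, boxe Aᵒᵈ Bᵒᵈ r.1 r.2) ↔
      ∀ X ⊆ F, p.1 ≤ c X ∨ p.2 ≤ d (F \ X) := by
    intro p
    constructor
    · intro hp X _
      refine hp (toDual (c X), toDual (d (F \ X))) ?_
      simp only [Set.mem_iInter]
      intro r hr
      by_cases hrX : r ∈ X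
      · exact Or.inl (Finset.le_sup (f := fun p : Aᵒᵈ × Bᵒᵈ => ofDual p.1) hrX)
      · exact Or.inr (Finset.le_sup (f := fun p : Aᵒᵈ × Bᵒᵈ => ofDual p.2)
          (Finset.mem_sdiff.2 ⟨hr, hrX⟩))
    · intro hp q hq
      have hqF : ∀ r ∈ F, ofDual r.1 ≤ ofDual q.1 ∨ ofDual r.2 ≤ ofDual q.2 := by
        simp only [Set.mem_iInter] at hq
        exact hq
      have h1 : c (F.filter fun r => ofDual r.1 ≤ ofDual q.1) ≤ ofDual q.1 :=
        Finset.sup_le fun r hr => (Finset.mem_filter.1 hr).2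
      have h2 : d (F \ F.filter fun r => ofDual r.1 ≤ ofDual q.1) ≤ ofDual q.2 :=
        Finset.sup_le fun r hr => by
          rw [Finset.mem_sdiff, Finset.mem_filter] at hr
          exact (hqF r hr.1).resolve_left fun h => hr.2 ⟨hr.1, h⟩
      exact (hp _ (Finset.filter_subset _ F)).imp (fun h => h.trans h1) (fun h => h.trans h2)
  refine ⟨⟨F.powerset.image fun X => (c X, d (F \ X)),
    (Finset.powerset_nonempty F).image _, Set.ext fun p => ?_⟩, c F, d F, fun p hp => ?_⟩
  · rw [key p]
    simp only [Set.mem_iInter, Finset.forall_mem_image, Finset.mem_powerset]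
    rfl
  · rw [key p] at hp
    -- These are the terms `X = F` and `X = ∅`, where one of the two joins is empty.
    have h1 : p.1 ≤ c F ∨ p.2 ≤ ⊥ := by simpa [d] using hp F subset_rfl
    have h2 : p.1 ≤ ⊥ ∨ p.2 ≤ d F := by simpa [c] using hp ∅ (Finset.empty_subset F)
    rcases h1 with h1 | h1
    · rcases h2 with h2 | h2
      · exact Or.inr (Or.inl fun x => h2.trans bot_le)
      · exact Or.inl ⟨h1, h2⟩
    · exact Or.inr (Or.inr fun y => h1.trans bot_le)

end Polars

/-- For lattices `A`, `B` with a least element, the order dual of `A ⊠ B` is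
order-isomorphic to the box product `Aᵈ □ Bᵈ` of the order duals. -/
theorem ltens_dual_iso_boxProd_dual
    (A B : Type*) [Lattice A] [OrderBot A] [Lattice B] [OrderBot B] :
    ∃ e : {H // H ∈ ltens A B} ≃ {K // K ∈ boxProd Aᵒᵈ Bᵒᵈ},
      ∀ H K : {H // H ∈ ltens A B}, H.1 ⊆ K.1 ↔ (e K).1 ⊆ (e H).1 := by
  refine ⟨⟨fun H => ⟨polar H.1, polar_mem H.2⟩, fun K => ⟨dualPolar K.1, dualPolar_mem K.2⟩,
    fun H => Subtype.ext (dualPolar_polar H.2.1), fun K => Subtype.ext (polar_dualPolar K.2)⟩,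
    fun H K => ⟨fun h q hq p hp => hq p (h hp), fun h => ?_⟩⟩
  rw [← dualPolar_polar H.2.1, ← dualPolar_polar K.2.1]
  exact fun p hp q hq => hp q (h hq)
end

section
/- Let A and B be lattices such that A ⊠ B is nonempty. If A and B both have permutable congruences (i.e., θ ∘ ψ = ψ ∘ θ, as composition of binary relations, for all lattice congruences θ, ψ), then the lattice A ⊠ B has permutable congruences. -/
/-!
The tensor product is written `LT A B` below. Its elements are closed sets of points of `A × B`:
each is a finite intersection of boxes and, being confined, is also generated by finitely many of
its points (`exists_gen`). This double finiteness gives joins (`exists_closure`), and all arguments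
are phrased with points and boxes, so that no zero or unit of `A` or `B` is ever needed.

A congruence `α` of `A` induces a congruence of `A ⊠ B`; for `H ≤ K` it relates `H` and `K` when
`LeA α K H`, i.e. every point `(x, y)` of `K` can be moved into `H` by changing `x` modulo `α`.
Similarly for `B`. Describing `LeA` by points shows compatibility with meets, and describing it by
boxes shows compatibility with joins.

* These induced congruences permute (`permAA`, `permAB` and their transposes). Along `H ≤ J ≤ K`,
  take finitely many generators `(x, y)` of `K`, permute at each of them, and adjoin the resulting
  points to `H`. Lattice operations extend this to intersections of an induced congruence of `A`
  with one of `B` (`perm_inter`).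
* Every congruence `Θ` of `A ⊠ B` is a join of such intersections (`exists_steps`). If
  `(a ⊠ d) ⊔ (c ⊠ b) ≡ a ⊠ b` modulo `Θ`, which is `Fills Θ c a d b`, then `Fills` persists on
  replacing the intervals `[c, a]` and `[d, b]` by any others collapsed by the principal congruences
  they generate, because `Fills` is a congruence in each of the two variables (`fills_con`). Hence
  `Θ` contains the intersection of the two induced congruences (`Fills.rel`). Conversely, a
  `Θ`-congruent pair `H ≤ K` is connected by steps of this kind, obtained by adjoining the
  generators of `K` to `H` while dropping the boxes that define `H` one at a time.

Commuting single steps then commutes whole chains, so any two congruences permute along chains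
`H ≤ J ≤ K`, and this implies permutability (`permute_of_chain`).
-/

section Defs

variable (A B : Type*) [Lattice A] [Lattice B]

/-- A lattice congruence. -/
def LatCon (L : Type*) [Lattice L] (θ : L → L → Prop) : Prop :=
  Equivalence θ ∧
  ∀ a b c d : L, θ a b → θ c d → θ (a ⊔ c) (b ⊔ d) ∧ θ (a ⊓ c) (b ⊓ d)

/-- A lattice congruence on a poset (which is a lattice), expressed via least upper
bounds and greatest lower bounds. -/
def PosetLatCon {P : Type*} [PartialOrder P] (θ : P → P → Prop) : Prop :=
  Equivalence θ ∧
  (∀ a b c d s t : P, θ a b → θ c d → IsLUB {a, c} s → IsLUB {b, d} t → θ s t) ∧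
  (∀ a b c d s t : P, θ a b → θ c d → IsGLB {a, c} s → IsGLB {b, d} t → θ s t)

end Defs

namespace LTens

/-! ### Finite meets and joins without bounds -/

section Finite

variable {ι L : Type*} [Lattice L]

theorem exists_finset_inf (F : Finset ι) (f : ι → L) (a : L) :
    ∃ m, m ≤ a ∧ (∀ i ∈ F, m ≤ f i) ∧ ∀ x, x ≤ a → (∀ i ∈ F, x ≤ f i) → x ≤ m := by
  classical
  induction F using Finset.induction_on with
  | empty => exact ⟨a, le_rfl, by simp, fun x hx _ => hx⟩
  | insert i F _ ih =>
    obtain ⟨m, h1, h2, h3⟩ := ih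
    refine ⟨m ⊓ f i, inf_le_of_left_le h1, ?_, ?_⟩
    · intro j hj
      rcases Finset.mem_insert.1 hj with rfl | hj
      · exact inf_le_right
      · exact inf_le_of_left_le (h2 j hj)
    · intro x hx hF
      exact le_inf (h3 x hx fun j hj => hF j (Finset.mem_insert_of_mem hj))
        (hF i (Finset.mem_insert_self _ _))

theorem exists_finset_sup (F : Finset ι) (f : ι → L) (a : L) :
    ∃ m, a ≤ m ∧ (∀ i ∈ F, f i ≤ m) ∧ ∀ x, a ≤ x → (∀ i ∈ F, f i ≤ x) → m ≤ x :=
  exists_finset_inf (L := Lᵒᵈ) F f a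

end Finite

/-! ### Congruences -/

section Con

variable {L : Type*} [Lattice L] {θ : L → L → Prop}

theorem con_refl (h : LatCon L θ) (a : L) : θ a a := h.1.refl a

theorem con_sup (h : LatCon L θ) {a b : L} (c : L) (hab : θ a b) : θ (c ⊔ a) (c ⊔ b) :=
  (h.2 _ _ _ _ (h.1.refl c) hab).1

theorem con_inf (h : LatCon L θ) {a b : L} (c : L) (hab : θ a b) : θ (c ⊓ a) (c ⊓ b) :=
  (h.2 _ _ _ _ (h.1.refl c) hab).2

/-- The principal congruence generated by the pair `(c, a)`. -/
def conGen (c a : L) (x y : L) : Prop :=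
  ∀ θ : L → L → Prop, LatCon L θ → θ c a → θ x y

theorem conGen_con (c a : L) : LatCon L (conGen c a) := by
  refine ⟨⟨fun x θ h _ => h.1.refl x, fun hxy θ h hc => h.1.symm (hxy θ h hc),
    fun hxy hyz θ h hc => h.1.trans (hxy θ h hc) (hyz θ h hc)⟩, ?_⟩
  intro x y z w hxy hzw
  exact ⟨fun θ h hc => (h.2 _ _ _ _ (hxy θ h hc) (hzw θ h hc)).1,
    fun θ h hc => (h.2 _ _ _ _ (hxy θ h hc) (hzw θ h hc)).2⟩

theorem conGen_self (c a : L) : conGen c a c a := fun _ _ h => h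

/-- Two congruences permute as soon as they do so along chains `a ≤ b ≤ c`, in both orders. -/
theorem permute_of_chain {ψ : L → L → Prop} (hθ : LatCon L θ) (hψ : LatCon L ψ)
    (h1 : ∀ a b c, a ≤ b → b ≤ c → θ a b → ψ b c → ∃ d, a ≤ d ∧ d ≤ c ∧ ψ a d ∧ θ d c)
    (h2 : ∀ a b c, a ≤ b → b ≤ c → ψ a b → θ b c → ∃ d, a ≤ d ∧ d ≤ c ∧ θ a d ∧ ψ d c)
    {a b c : L} (hab : θ a b) (hbc : ψ b c) : ∃ d, ψ a d ∧ θ d c := by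
  have e1 : θ a (a ⊔ b) := by simpa using con_sup hθ a hab
  have e2 : ψ (a ⊔ b) (a ⊔ b ⊔ c) := by simpa [sup_assoc] using con_sup hψ (a ⊔ b) hbc
  have e3 : ψ c (b ⊔ c) := by simpa [sup_comm] using con_sup hψ c (hψ.1.symm hbc)
  have e4 : θ (b ⊔ c) (a ⊔ b ⊔ c) := by
    have := con_sup hθ (b ⊔ c) (hθ.1.symm hab)
    rwa [sup_eq_left.2 le_sup_left, sup_comm (b ⊔ c), ← sup_assoc] at this
  obtain ⟨d, hd1, hd2, hd3, hd4⟩ := h1 _ _ _ le_sup_left le_sup_left e1 e2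
  obtain ⟨e, he1, he2, he3, he4⟩ := h2 _ _ _ le_sup_right
    (sup_le_sup_right le_sup_right _) e3 e4
  refine ⟨d ⊓ e, ?_, ?_⟩
  · have := (hψ.2 _ _ _ _ hd3 (hψ.1.symm he4)).2
    rwa [inf_eq_left.2 (hd1.trans hd2)] at this
  · have := (hθ.2 _ _ _ _ hd4 (hθ.1.symm he3)).2
    rwa [inf_eq_right.2 (he1.trans he2)] at this

end Con

/-! ### The lattice structure of the tensor product -/

/-- The lattice tensor product `A ⊠ B` as a type. -/
def LT (A B : Type*) [Lattice A] [Lattice B] : Type _ := {H : Set (A × B) // H ∈ ltens A B}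

instance (A B : Type*) [Lattice A] [Lattice B] : PartialOrder (LT A B) :=
  inferInstanceAs (PartialOrder {H : Set (A × B) // H ∈ ltens A B})

section Basic

variable {A B : Type*} [Lattice A] [Lattice B]

theorem exists_boxes (H : LT A B) : ∃ F : Finset (A × B), F.Nonempty ∧
    ∀ x y, (x, y) ∈ H.1 ↔ ∀ p ∈ F, x ≤ p.1 ∨ y ≤ p.2 := by
  obtain ⟨⟨F, hF, hH⟩, -⟩ := H.2
  refine ⟨F, hF, fun x y => ?_⟩
  rw [hH]
  simp [boxe]

theorem exists_confined (H : LT A B) : ∃ (a : A) (b : B),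
    ∀ x y, (x, y) ∈ H.1 → (x ≤ a ∧ y ≤ b) ∨ IsBot x ∨ IsBot y := by
  obtain ⟨-, a, b, h⟩ := H.2
  exact ⟨a, b, fun _ _ hxy => h hxy⟩

theorem exists_mk (F : Finset (A × B)) (hF : F.Nonempty) (a : A) (b : B)
    (h : ∀ x y, (∀ p ∈ F, x ≤ p.1 ∨ y ≤ p.2) → (x ≤ a ∧ y ≤ b) ∨ IsBot x ∨ IsBot y) :
    ∃ H : LT A B, ∀ x y, (x, y) ∈ H.1 ↔ ∀ p ∈ F, x ≤ p.1 ∨ y ≤ p.2 := by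
  refine ⟨⟨⋂ p ∈ F, boxe A B p.1 p.2, ⟨F, hF, rfl⟩, a, b, ?_⟩, ?_⟩
  · rintro ⟨x, y⟩ hxy
    exact h x y (by simpa [boxe] using hxy)
  · intro x y
    simp [boxe]

theorem le_def {H K : LT A B} : H ≤ K ↔ ∀ x y, (x, y) ∈ H.1 → (x, y) ∈ K.1 :=
  ⟨fun h _ _ hxy => h hxy, fun h p hp => h p.1 p.2 hp⟩

theorem mem_down {H : LT A B} {x x' : A} {y y' : B} (hx : x' ≤ x) (hy : y' ≤ y)
    (h : (x, y) ∈ H.1) : (x', y') ∈ H.1 := by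
  obtain ⟨F, -, hF⟩ := exists_boxes H
  rw [hF] at h ⊢
  exact fun p hp => (h p hp).imp hx.trans hy.trans

theorem mem_sup_left {H : LT A B} {x x' : A} {y : B}
    (h : (x, y) ∈ H.1) (h' : (x', y) ∈ H.1) : (x ⊔ x', y) ∈ H.1 := by
  obtain ⟨F, -, hF⟩ := exists_boxes H
  rw [hF] at h h' ⊢
  intro p hp
  rcases h p hp with h1 | h1
  · rcases h' p hp with h2 | h2
    · exact Or.inl (sup_le h1 h2)
    · exact Or.inr h2
  · exact Or.inr h1

/-- `H` is contained in the box `a □ b`. -/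
def InBox (H : LT A B) (a : A) (b : B) : Prop := ∀ x y, (x, y) ∈ H.1 → x ≤ a ∨ y ≤ b

theorem le_of_inBox {H K : LT A B} (h : ∀ a b, InBox K a b → InBox H a b) : H ≤ K := by
  obtain ⟨F, -, hF⟩ := exists_boxes K
  refine le_def.2 fun x y hxy => (hF x y).2 fun p hp => h p.1 p.2 ?_ x y hxy
  exact fun u v huv => (hF u v).1 huv p hp

/-- The points of `F` generate `H`: every box containing them contains `H`. -/
def Gen (F : Finset (A × B)) (H : LT A B) : Prop :=
  ∀ a b, (∀ p ∈ F, p.1 ≤ a ∨ p.2 ≤ b) → InBox H a b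

theorem Gen.le {F : Finset (A × B)} {H K : LT A B} (h : Gen F H) (hF : ∀ p ∈ F, p ∈ K.1) :
    H ≤ K :=
  le_of_inBox fun a b hK => h a b fun p hp => hK p.1 p.2 (hF p hp)

/-- Confined elements are generated by finitely many points: if `H` is the intersection of the
boxes `aᵢ □ bᵢ`, `i ∈ I`, and is confined to `a ⊠ b`, then the points
`(a ⊓ ⋀_{i ∈ S} aᵢ, b ⊓ ⋀_{i ∉ S} bᵢ)`, `S ⊆ I`, generate it. -/
theorem exists_gen (H : LT A B) : ∃ F : Finset (A × B), (∀ p ∈ F, p ∈ H.1) ∧ Gen F H := by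
  classical
  obtain ⟨I, -, hI⟩ := exists_boxes H
  obtain ⟨a, b, hab⟩ := exists_confined H
  choose m hm1 hm2 hm3 using fun S : Finset (A × B) => exists_finset_inf S Prod.fst a
  choose n hn1 hn2 hn3 using fun S : Finset (A × B) => exists_finset_inf S Prod.snd b
  refine ⟨I.powerset.image fun S => (m S, n (I \ S)), ?_, ?_⟩
  · intro p hp
    obtain ⟨S, hS, rfl⟩ := Finset.mem_image.1 hp
    refine (hI _ _).2 fun q hq => ?_
    by_cases hqS : q ∈ S
    · exact Or.inl (hm2 S q hqS)
    · exact Or.inr (hn2 _ q (Finset.mem_sdiff.2 ⟨hq, hqS⟩))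
  · intro u v huv x y hxy
    rcases hab x y hxy with ⟨hx, hy⟩ | hx | hy
    · have h := huv _ (Finset.mem_image_of_mem (fun S => (m S, n (I \ S)))
        (Finset.mem_powerset.2 (Finset.filter_subset (fun q => x ≤ q.1) I)))
      refine h.imp (fun h => le_trans ?_ h) (fun h => le_trans ?_ h)
      · exact hm3 _ _ hx fun q hq => (Finset.mem_filter.1 hq).2
      · refine hn3 _ _ hy fun q hq => ?_
        obtain ⟨hq1, hq2⟩ := Finset.mem_sdiff.1 hq
        exact ((hI x y).1 hxy q hq1).resolve_left fun h =>
          hq2 (Finset.mem_filter.2 ⟨hq1, h⟩)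
    · exact Or.inl (hx u)
    · exact Or.inr (hy v)

/-- A box small enough to be contained in `H`. -/
theorem exists_small (H : LT A B) : ∃ (c : A) (d : B), ∀ x y, x ≤ c ∨ y ≤ d → (x, y) ∈ H.1 := by
  obtain ⟨I, ⟨i, hi⟩, hI⟩ := exists_boxes H
  obtain ⟨c, -, hc, -⟩ := exists_finset_inf I Prod.fst i.1
  obtain ⟨d, -, hd, -⟩ := exists_finset_inf I Prod.snd i.2
  exact ⟨c, d, fun x y h => (hI x y).2 fun p hp =>
    h.imp (fun h => h.trans (hc p hp)) (fun h => h.trans (hd p hp))⟩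

/-- There is a least element of `A ⊠ B` containing `H` and finitely many given points `P`. With
`F` a finite set generating `H`, and `c □ d ⊆ H`, it is the intersection over `S ⊆ F ∪ P` of the
boxes `(c ⊔ ⋁_{p ∈ S} p.1) □ (d ⊔ ⋁_{p ∉ S} p.2)`. -/
theorem exists_closure (H : LT A B) (P : Finset (A × B)) : ∃ D : LT A B, H ≤ D ∧
    (∀ p ∈ P, p ∈ D.1) ∧
    ∀ a b, InBox H a b → (∀ p ∈ P, p.1 ≤ a ∨ p.2 ≤ b) → InBox D a b := by
  classical
  obtain ⟨F, hFH, hF⟩ := exists_gen H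
  obtain ⟨c, d, hcd⟩ := exists_small H
  obtain ⟨a, b, hab⟩ := exists_confined H
  obtain ⟨a', haa, ha', -⟩ := exists_finset_sup P Prod.fst a
  obtain ⟨b', hbb, hb', -⟩ := exists_finset_sup P Prod.snd b
  choose m hm1 hm2 hm3 using fun S : Finset (A × B) => exists_finset_sup S Prod.fst c
  choose n hn1 hn2 hn3 using fun S : Finset (A × B) => exists_finset_sup S Prod.snd d
  set Q := (F ∪ P).powerset.image fun S => (m S, n ((F ∪ P) \ S)) with hQ
  have key : ∀ u v, InBox H u v → (∀ p ∈ P, p.1 ≤ u ∨ p.2 ≤ v) →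
      ∀ x y, (∀ q ∈ Q, x ≤ q.1 ∨ y ≤ q.2) → x ≤ u ∨ y ≤ v := by
    intro u v hH hP x y hxy
    have h := hxy _ (Finset.mem_image_of_mem (fun S => (m S, n ((F ∪ P) \ S)))
        (Finset.mem_powerset.2 (Finset.filter_subset (fun q => q.1 ≤ u) (F ∪ P))))
    -- `c □ d ⊆ u □ v` forces `c ≤ u` unless `v` is the top element; likewise for `d ≤ v`.
    rcases h with h | h
    · rcases hH c y (hcd _ _ (Or.inl le_rfl)) with hc | hy
      · exact Or.inl (h.trans (hm3 _ _ hc fun q hq => (Finset.mem_filter.1 hq).2))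
      · exact Or.inr hy
    · rcases hH x d (hcd _ _ (Or.inr le_rfl)) with hx | hd
      · exact Or.inl hx
      · refine Or.inr (h.trans (hn3 _ _ hd fun q hq => ?_))
        obtain ⟨hq1, hq2⟩ := Finset.mem_sdiff.1 hq
        have hqu : ¬ q.1 ≤ u := fun h => hq2 (Finset.mem_filter.2 ⟨hq1, h⟩)
        rcases Finset.mem_union.1 hq1 with hq | hq
        · exact (hH q.1 q.2 (hFH q hq)).resolve_left hqu
        · exact (hP q hq).resolve_left hqu
  have box : ∀ p ∈ F ∪ P, ∀ q ∈ Q, p.1 ≤ q.1 ∨ p.2 ≤ q.2 := by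
    intro p hp q hq
    obtain ⟨S, -, rfl⟩ := Finset.mem_image.1 hq
    by_cases hpS : p ∈ S
    · exact Or.inl (hm2 S p hpS)
    · exact Or.inr (hn2 _ p (Finset.mem_sdiff.2 ⟨hp, hpS⟩))
  -- Confinement: the closure lies in `(a' □ d) ∩ (c □ b') ⊆ H ∪ (a' ⊠ b')`.
  obtain ⟨D, hD⟩ := exists_mk Q ⟨_, Finset.mem_image_of_mem _ (Finset.empty_mem_powerset _)⟩ a' b'
    (by
      intro x y hxy
      have conf : (x, y) ∈ H.1 → (x ≤ a' ∧ y ≤ b') ∨ IsBot x ∨ IsBot y := fun h =>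
        (hab x y h).imp_left fun h => ⟨h.1.trans haa, h.2.trans hbb⟩
      have h1 : x ≤ a' ∨ y ≤ d := by
        refine key a' d ?_ (fun p hp => Or.inl (ha' p hp)) x y hxy
        intro u v huv
        rcases hab u v huv with h | h | h
        · exact Or.inl (h.1.trans haa)
        · exact Or.inl (h _)
        · exact Or.inr (h _)
      have h2 : x ≤ c ∨ y ≤ b' := by
        refine key c b' ?_ (fun p hp => Or.inr (hb' p hp)) x y hxy
        intro u v huv
        rcases hab u v huv with h | h | h
        · exact Or.inr (h.2.trans hbb)
        · exact Or.inl (h _)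
        · exact Or.inr (h _)
      rcases h1 with h1 | h1
      · rcases h2 with h2 | h2
        · exact conf (hcd _ _ (Or.inl h2))
        · exact Or.inl ⟨h1, h2⟩
      · exact conf (hcd _ _ (Or.inr h1)))
  refine ⟨D, ?_, ?_, ?_⟩
  · refine hF.le fun p hp => (hD p.1 p.2).2 (box p (Finset.mem_union_left _ hp))
  · exact fun p hp => (hD p.1 p.2).2 (box p (Finset.mem_union_right _ hp))
  · exact fun u v hH hP x y hxy => key u v hH hP x y ((hD x y).1 hxy)

theorem exists_sup (H K : LT A B) : ∃ D : LT A B, H ≤ D ∧ K ≤ D ∧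
    ∀ a b, InBox H a b → InBox K a b → InBox D a b := by
  obtain ⟨F, hFK, hF⟩ := exists_gen K
  obtain ⟨D, h1, h2, h3⟩ := exists_closure H F
  exact ⟨D, h1, hF.le h2, fun a b hH hK => h3 a b hH fun p hp => hK p.1 p.2 (hFK p hp)⟩

theorem exists_inf (H K : LT A B) : ∃ D : LT A B, ∀ x y,
    (x, y) ∈ D.1 ↔ (x, y) ∈ H.1 ∧ (x, y) ∈ K.1 := by
  classical
  obtain ⟨F, hF, hFH⟩ := exists_boxes H
  obtain ⟨G, -, hGK⟩ := exists_boxes K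
  obtain ⟨a, b, hab⟩ := exists_confined H
  obtain ⟨D, hD⟩ := exists_mk (F ∪ G) (hF.mono Finset.subset_union_left) a b fun x y h =>
    hab x y ((hFH x y).2 fun p hp => h p (Finset.mem_union_left _ hp))
  refine ⟨D, fun x y => ?_⟩
  rw [hD, hFH, hGK, Finset.forall_mem_union]

/-- Unlike a box, the intersection of a box with a confined element is confined. -/
theorem exists_inter_box (H : LT A B) (a : A) (b : B) : ∃ D : LT A B, ∀ x y,
    (x, y) ∈ D.1 ↔ (x, y) ∈ H.1 ∧ (x ≤ a ∨ y ≤ b) := by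
  classical
  obtain ⟨F, hF, hFH⟩ := exists_boxes H
  obtain ⟨a', b', hab⟩ := exists_confined H
  obtain ⟨D, hD⟩ := exists_mk (insert (a, b) F) (Finset.insert_nonempty _ _) a' b' fun x y h =>
    hab x y ((hFH x y).2 fun p hp => h p (Finset.mem_insert_of_mem hp))
  refine ⟨D, fun x y => ?_⟩
  rw [hD, hFH, Finset.forall_mem_insert, and_comm]

noncomputable instance : Lattice (LT A B) where
  sup H K := (exists_sup H K).choose
  inf H K := (exists_inf H K).choose
  le_sup_left H K := (exists_sup H K).choose_spec.1
  le_sup_right H K := (exists_sup H K).choose_spec.2.1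
  sup_le H K _ h1 h2 := le_of_inBox fun a b hD =>
    (exists_sup H K).choose_spec.2.2 a b (fun x y h => hD x y (h1 h)) fun x y h => hD x y (h2 h)
  inf_le_left H K := le_def.2 fun x y h => (((exists_inf H K).choose_spec x y).1 h).1
  inf_le_right H K := le_def.2 fun x y h => (((exists_inf H K).choose_spec x y).1 h).2
  le_inf _ K D h1 h2 := le_def.2 fun x y h =>
    ((exists_inf K D).choose_spec x y).2 ⟨h1 h, h2 h⟩

theorem sup_inBox {H K : LT A B} {a : A} {b : B} (h : InBox H a b) (h' : InBox K a b) :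
    InBox (H ⊔ K) a b :=
  (exists_sup H K).choose_spec.2.2 a b h h'

theorem mem_inf {H K : LT A B} {x : A} {y : B} :
    (x, y) ∈ (H ⊓ K).1 ↔ (x, y) ∈ H.1 ∧ (x, y) ∈ K.1 :=
  (exists_inf H K).choose_spec x y

/-- A substitute for the pure tensor `a ⊠ b`, which need not belong to the lattice when a zero
is missing: the mixed tensor `(a □ d) ∩ (c □ b)` for a small enough box `c □ d`. -/
theorem exists_mix (H K : LT A B) (a : A) (b : B) : ∃ X : LT A B, (a, b) ∈ X.1 ∧
    ∀ x y, (x, y) ∈ X.1 → ((x, y) ∈ H.1 ∧ (x, y) ∈ K.1) ∨ (x ≤ a ∧ y ≤ b) := by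
  classical
  obtain ⟨c, d, hcd⟩ := exists_small (H ⊓ K)
  obtain ⟨a', b', hab⟩ := exists_confined H
  have key : ∀ x y, (∀ p ∈ ({(a, d), (c, b)} : Finset (A × B)), x ≤ p.1 ∨ y ≤ p.2) →
      ((x, y) ∈ H.1 ∧ (x, y) ∈ K.1) ∨ (x ≤ a ∧ y ≤ b) := by
    intro x y h
    have h1 : x ≤ a ∨ y ≤ d := h (a, d) (by simp)
    have h2 : x ≤ c ∨ y ≤ b := h (c, b) (by simp)
    rcases h1 with h1 | h1
    · rcases h2 with h2 | h2
      · exact Or.inl (mem_inf.1 (hcd _ _ (Or.inl h2)))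
      · exact Or.inr ⟨h1, h2⟩
    · exact Or.inl (mem_inf.1 (hcd _ _ (Or.inr h1)))
  obtain ⟨X, hX⟩ := exists_mk {(a, d), (c, b)} (by simp) (a' ⊔ a) (b' ⊔ b) (by
    intro x y h
    rcases key x y h with h | h
    · exact (hab x y h.1).imp_left fun h => ⟨le_sup_of_le_left h.1, le_sup_of_le_left h.2⟩
    · exact Or.inl ⟨le_sup_of_le_right h.1, le_sup_of_le_right h.2⟩)
  exact ⟨X, (hX a b).2 (by simp), fun x y h => key x y ((hX x y).1 h)⟩

end Basic

/-! ### Exchanging the two factors -/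

section Swap

variable {A B : Type*} [Lattice A] [Lattice B]

theorem exists_swap (H : LT A B) : ∃ K : LT B A, ∀ x y, (y, x) ∈ K.1 ↔ (x, y) ∈ H.1 := by
  classical
  obtain ⟨F, hF, hFH⟩ := exists_boxes H
  obtain ⟨a, b, hab⟩ := exists_confined H
  have e : ∀ x y, (∀ p ∈ F.image Prod.swap, y ≤ p.1 ∨ x ≤ p.2) ↔ (x, y) ∈ H.1 := by
    intro x y
    rw [hFH, Finset.forall_mem_image]
    exact forall₂_congr fun p _ => or_comm
  obtain ⟨K, hK⟩ := exists_mk (F.image Prod.swap) (hF.image _) b a (by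
    intro y x h
    rcases hab x y ((e x y).1 h) with h | h | h
    · exact Or.inl h.symm
    · exact Or.inr (Or.inr h)
    · exact Or.inr (Or.inl h))
  exact ⟨K, fun x y => (hK y x).trans (e x y)⟩

/-- The transpose of an element of `A ⊠ B`. -/
noncomputable def tr (H : LT A B) : LT B A := (exists_swap H).choose

theorem mem_tr {H : LT A B} {x : A} {y : B} : (y, x) ∈ (tr H).1 ↔ (x, y) ∈ H.1 :=
  (exists_swap H).choose_spec x y

theorem tr_tr (H : LT A B) : tr (tr H) = H :=
  le_antisymm (le_def.2 fun _ _ h => mem_tr.1 (mem_tr.1 h))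
    (le_def.2 fun _ _ h => mem_tr.2 (mem_tr.2 h))

variable (A B) in
/-- Transposition as an isomorphism of `A ⊠ B` onto `B ⊠ A`. -/
noncomputable def trIso : LT A B ≃o LT B A where
  toFun := tr
  invFun := tr
  left_inv := tr_tr
  right_inv := tr_tr
  map_rel_iff' := by
    intro H K
    exact ⟨fun h => le_def.2 fun x y hxy => mem_tr.1 (le_def.1 h y x (mem_tr.2 hxy)),
      fun h => le_def.2 fun y x hxy => mem_tr.2 (le_def.1 h x y (mem_tr.1 hxy))⟩

theorem tr_le {H K : LT A B} : tr H ≤ tr K ↔ H ≤ K := (trIso A B).map_rel_iff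

theorem tr_sup (H K : LT A B) : tr (H ⊔ K) = tr H ⊔ tr K := (trIso A B).map_sup H K

theorem tr_inf (H K : LT A B) : tr (H ⊓ K) = tr H ⊓ tr K := (trIso A B).map_inf H K

end Swap

/-! ### Inclusion modulo a congruence of one factor -/

section LeMod

variable {A B : Type*} [Lattice A] [Lattice B]

/-- `H ⊆ K` modulo the congruence `α` of the first factor. For `K ≤ H` this says that `H` and `K`
have the same image in `(A/α) ⊠ B`. -/
def LeA (α : A → A → Prop) (H K : LT A B) : Prop :=
  ∀ x y, (x, y) ∈ H.1 → ∃ z, α x z ∧ (z, y) ∈ K.1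

/-- `H ⊆ K` modulo the congruence `β` of the second factor. -/
def LeB (β : B → B → Prop) (H K : LT A B) : Prop := LeA β (tr H) (tr K)

theorem leB_iff {β : B → B → Prop} {H K : LT A B} :
    LeB β H K ↔ ∀ x y, (x, y) ∈ H.1 → ∃ y', β y y' ∧ (x, y') ∈ K.1 := by
  constructor
  · intro h x y hxy
    obtain ⟨y', h1, h2⟩ := h y x (mem_tr.2 hxy)
    exact ⟨y', h1, mem_tr.1 h2⟩
  · intro h y x hxy
    obtain ⟨y', h1, h2⟩ := h x y (mem_tr.1 hxy)
    exact ⟨y', h1, mem_tr.2 h2⟩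

variable {α : A → A → Prop} {β : B → B → Prop}

theorem LeA.exists_le (hα : LatCon A α) {H K : LT A B} (h : LeA α H K) {x : A} {y : B}
    (hxy : (x, y) ∈ H.1) : ∃ x' ≤ x, α x' x ∧ (x', y) ∈ K.1 := by
  obtain ⟨x', h1, h2⟩ := h x y hxy
  refine ⟨x ⊓ x', inf_le_left, ?_, mem_down inf_le_right le_rfl h2⟩
  simpa using con_inf hα x (hα.1.symm h1)

theorem LeB.exists_le (hβ : LatCon B β) {H K : LT A B} (h : LeB β H K) {x : A} {y : B}
    (hxy : (x, y) ∈ H.1) : ∃ y' ≤ y, β y' y ∧ (x, y') ∈ K.1 := by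
  obtain ⟨y', h1, h2, h3⟩ := LeA.exists_le hβ h (mem_tr.2 hxy)
  exact ⟨y', h1, h2, mem_tr.1 h3⟩

theorem LeA.mono {H H' K K' : LT A B} (h : LeA α H K) (h1 : H' ≤ H) (h2 : K ≤ K') :
    LeA α H' K' := fun x y hxy => by
  obtain ⟨x', h3, h4⟩ := h x y (h1 hxy)
  exact ⟨x', h3, h2 h4⟩

theorem LeB.mono {H H' K K' : LT A B} (h : LeB β H K) (h1 : H' ≤ H) (h2 : K ≤ K') :
    LeB β H' K' := LeA.mono h (tr_le.2 h1) (tr_le.2 h2)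

theorem leA_of_le (hα : LatCon A α) {H K : LT A B} (h : H ≤ K) : LeA α H K :=
  fun x _ hxy => ⟨x, hα.1.refl x, h hxy⟩

theorem leB_of_le (hβ : LatCon B β) {H K : LT A B} (h : H ≤ K) : LeB β H K :=
  leA_of_le hβ (tr_le.2 h)

/-- Inclusion modulo `α` can be tested on boxes: it suffices that every box containing `K` becomes
a box containing `H` after replacing its first coordinate modulo `α`. Together with its converse
`LeA.exists_inBox`, this is what makes `LeA` compatible with joins. -/
theorem leA_of_inBox (hα : LatCon A α) {H K : LT A B}
    (h : ∀ a b, InBox K a b → ∃ a', α a a' ∧ InBox H a' b) : LeA α H K := by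
  classical
  obtain ⟨I, -, hI⟩ := exists_boxes K
  intro x y hxy
  suffices H : ∀ J ⊆ I, ∃ x', α x x' ∧ x' ≤ x ∧ ∀ p ∈ J, x' ≤ p.1 ∨ y ≤ p.2 by
    obtain ⟨x', h1, -, h2⟩ := H I subset_rfl
    exact ⟨x', h1, (hI x' y).2 h2⟩
  intro J
  induction J using Finset.induction_on with
  | empty => exact fun _ => ⟨x, hα.1.refl x, le_rfl, by simp⟩
  | insert p J _ ih =>
    intro hJ
    obtain ⟨x', h1, h1', h2⟩ := ih ((Finset.subset_insert _ _).trans hJ)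
    obtain ⟨a', h3, h4⟩ := h p.1 p.2 fun u v huv =>
      (hI u v).1 huv p (hJ (Finset.mem_insert_self _ _))
    rcases h4 x y hxy with h5 | h5
    · refine ⟨x' ⊓ p.1, ?_, inf_le_of_left_le h1', ?_⟩
      · have := con_inf hα x' (hα.1.symm h3)
        rw [inf_eq_left.2 (h1'.trans h5)] at this
        exact hα.1.trans h1 this
      · refine Finset.forall_mem_insert _ _ _ |>.2 ⟨Or.inl inf_le_right, fun q hq => ?_⟩
        exact (h2 q hq).imp_left fun h => inf_le_of_left_le h
    · exact ⟨x', h1, h1', Finset.forall_mem_insert _ _ _ |>.2 ⟨Or.inr h5, h2⟩⟩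

theorem exists_box_of_points (hα : LatCon A α) {K : LT A B} (F : Finset (A × B))
    (h : ∀ p ∈ F, ∃ x', α p.1 x' ∧ (x', p.2) ∈ K.1) {a : A} {b : B} (hK : InBox K a b) :
    ∃ a', α a a' ∧ a ≤ a' ∧ ∀ p ∈ F, p.1 ≤ a' ∨ p.2 ≤ b := by
  classical
  induction F using Finset.induction_on with
  | empty => exact ⟨a, hα.1.refl a, le_rfl, by simp⟩
  | insert p F _ ih =>
    obtain ⟨a', h1, h1', h2⟩ := ih fun q hq => h q (Finset.mem_insert_of_mem hq)
    obtain ⟨x', h3, h4⟩ := h p (Finset.mem_insert_self _ _)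
    rcases hK _ _ h4 with h5 | h5
    · refine ⟨a' ⊔ p.1, ?_, le_sup_of_le_left h1', ?_⟩
      · have := con_sup hα a' (hα.1.symm h3)
        rw [sup_eq_left.2 (h5.trans h1')] at this
        exact hα.1.trans h1 this
      · refine Finset.forall_mem_insert _ _ _ |>.2 ⟨Or.inl le_sup_right, fun q hq => ?_⟩
        exact (h2 q hq).imp_left le_sup_of_le_left
    · exact ⟨a', h1, h1', Finset.forall_mem_insert _ _ _ |>.2 ⟨Or.inr h5, h2⟩⟩

theorem LeA.exists_inBox (hα : LatCon A α) {H K : LT A B} (h : LeA α H K) {a : A} {b : B}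
    (hK : InBox K a b) : ∃ a', α a a' ∧ a ≤ a' ∧ InBox H a' b := by
  obtain ⟨F, hFH, hF⟩ := exists_gen H
  obtain ⟨u, h1, h2, h3⟩ := exists_box_of_points hα F (fun p hp => h p.1 p.2 (hFH p hp)) hK
  exact ⟨u, h1, h2, hF u b h3⟩

/-- Inclusion modulo `α` can be tested on any finite set of generators. -/
theorem Gen.leA (hα : LatCon A α) {F : Finset (A × B)} {H K : LT A B} (hF : Gen F H)
    (h : ∀ p ∈ F, ∃ x', α p.1 x' ∧ (x', p.2) ∈ K.1) : LeA α H K :=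
  leA_of_inBox hα fun a b hK => by
    obtain ⟨a', h1, -, h3⟩ := exists_box_of_points hα F h hK
    exact ⟨a', h1, hF a' b h3⟩

theorem LeA.sup (hα : LatCon A α) {H H' K : LT A B} (h : LeA α H K) (h' : LeA α H' K) :
    LeA α (H ⊔ H') K :=
  leA_of_inBox hα fun a b hK => by
    obtain ⟨a1, h1, h2, h3⟩ := h.exists_inBox hα hK
    obtain ⟨a2, h4, h5, h6⟩ := h'.exists_inBox hα hK
    refine ⟨a1 ⊔ a2, by simpa using (hα.2 _ _ _ _ h1 h4).1, sup_inBox ?_ ?_⟩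
    · exact fun x y hxy => (h3 x y hxy).imp_left le_sup_of_le_left
    · exact fun x y hxy => (h6 x y hxy).imp_left le_sup_of_le_right

theorem LeB.sup (hβ : LatCon B β) {H H' K : LT A B} (h : LeB β H K) (h' : LeB β H' K) :
    LeB β (H ⊔ H') K := by
  unfold LeB at *
  rw [tr_sup]
  exact LeA.sup hβ h h'

theorem LeA.inf (hα : LatCon A α) {H K K' : LT A B} (h : LeA α H K) (h' : LeA α H K') :
    LeA α H (K ⊓ K') := by
  intro x y hxy
  obtain ⟨x1, h1, h2⟩ := h x y hxy
  obtain ⟨x2, h3, h4⟩ := h' x y hxy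
  refine ⟨x1 ⊓ x2, by simpa using (hα.2 _ _ _ _ h1 h3).2, mem_inf.2 ⟨?_, ?_⟩⟩
  · exact mem_down inf_le_left le_rfl h2
  · exact mem_down inf_le_right le_rfl h4

theorem LeB.inf (hβ : LatCon B β) {H K K' : LT A B} (h : LeB β H K) (hK : LeB β H K') :
    LeB β H (K ⊓ K') := by
  unfold LeB at *
  rw [tr_inf]
  exact LeA.inf hβ h hK

/-- Adjoin to `H` finitely many points `P` of a larger element `K`. The result `D` lies below `H`
modulo a congruence of either factor as soon as all points of `P` do. -/
theorem exists_adjoin (H K : LT A B) (hHK : H ≤ K) (P : Finset (A × B)) (hP : ∀ p ∈ P, p ∈ K.1) :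
    ∃ D : LT A B, H ≤ D ∧ D ≤ K ∧ (∀ p ∈ P, p ∈ D.1) ∧
      (∀ α : A → A → Prop, LatCon A α →
        (∀ p ∈ P, ∃ x', α p.1 x' ∧ (x', p.2) ∈ H.1) → LeA α D H) ∧
      (∀ β : B → B → Prop, LatCon B β →
        (∀ p ∈ P, ∃ y', β p.2 y' ∧ (p.1, y') ∈ H.1) → LeB β D H) := by
  classical
  obtain ⟨D, h1, h2, h3⟩ := exists_closure H P
  obtain ⟨F, hFH, hF⟩ := exists_gen H
  have hgen : Gen (F ∪ P) D := fun a b h =>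
    h3 a b (hF a b fun p hp => h p (Finset.mem_union_left _ hp)) fun p hp =>
      h p (Finset.mem_union_right _ hp)
  refine ⟨D, h1, hgen.le ?_, h2, ?_, ?_⟩
  · intro p hp
    rcases Finset.mem_union.1 hp with hp | hp
    · exact hHK (hFH p hp)
    · exact hP p hp
  · intro α hα h
    refine hgen.leA hα fun p hp => ?_
    rcases Finset.mem_union.1 hp with hp | hp
    · exact ⟨p.1, hα.1.refl _, hFH p hp⟩
    · exact h p hp
  · intro β hβ h
    have hgen' : Gen ((F ∪ P).image Prod.swap) (tr D) := by
      intro b a hba y x hxy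
      exact (hgen a b (fun p hp => (hba p.swap (Finset.mem_image_of_mem _ hp)).symm) x y
        (mem_tr.1 hxy)).symm
    refine hgen'.leA hβ fun q hq => ?_
    obtain ⟨p, hp, rfl⟩ := Finset.mem_image.1 hq
    rcases Finset.mem_union.1 hp with hp | hp
    · exact ⟨p.2, hβ.1.refl _, mem_tr.2 (hFH p hp)⟩
    · obtain ⟨y', h4, h5⟩ := h p hp
      exact ⟨y', h4, mem_tr.2 h5⟩

end LeMod

/-! ### Permuting the congruences induced by the factors -/

section Perm

variable {A B : Type*} [Lattice A] [Lattice B]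

/-- `L` has permutable congruences. -/
def PermCon (L : Type*) [Lattice L] : Prop :=
  ∀ θ ψ : L → L → Prop, LatCon L θ → LatCon L ψ →
    ∀ a b : L, (∃ c, θ a c ∧ ψ c b) ↔ (∃ c, ψ a c ∧ θ c b)

/-- Two congruences induced by the first factor permute: permute them at finitely many points
generating `K`. -/
theorem permAA (hA : PermCon A) {α γ : A → A → Prop} (hα : LatCon A α) (hγ : LatCon A γ)
    {H J K : LT A B} (hHJ : H ≤ J) (hJK : J ≤ K) (h1 : LeA α J H) (h2 : LeA γ K J) :
    ∃ D, H ≤ D ∧ D ≤ K ∧ LeA γ D H ∧ LeA α K D := by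
  classical
  obtain ⟨F, hFK, hF⟩ := exists_gen K
  have key : ∀ p : A × B, ∃ z, p ∈ F →
      z ≤ p.1 ∧ α p.1 z ∧ ∃ x, γ z x ∧ (x, p.2) ∈ H.1 := by
    intro p
    by_cases hp : p ∈ F
    · obtain ⟨x', h3, h4, h5⟩ := h2.exists_le hγ (hFK p hp)
      obtain ⟨x'', h6, h7, h8⟩ := h1.exists_le hα h5
      obtain ⟨z, h9, h10⟩ := (hA α γ hα hγ x'' p.1).1 ⟨x', h7, h4⟩
      refine ⟨p.1 ⊓ z, fun _ => ⟨inf_le_left, ?_, x'', ?_, h8⟩⟩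
      · simpa using con_inf hα p.1 (hα.1.symm h10)
      · have := con_inf hγ p.1 (hγ.1.symm h9)
        rwa [inf_eq_right.2 (h6.trans h3)] at this
    · exact ⟨p.1, fun h => absurd h hp⟩
  choose z hz using key
  obtain ⟨D, h3, h4, h5, h6, -⟩ := exists_adjoin H K (hHJ.trans hJK)
    (F.image fun p => (z p, p.2)) (by
      intro q hq
      obtain ⟨p, hp, rfl⟩ := Finset.mem_image.1 hq
      exact mem_down (hz p hp).1 le_rfl (hFK p hp))
  refine ⟨D, h3, h4, h6 γ hγ ?_, hF.leA hα ?_⟩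
  · intro q hq
    obtain ⟨p, hp, rfl⟩ := Finset.mem_image.1 hq
    exact (hz p hp).2.2
  · intro p hp
    exact ⟨z p, (hz p hp).2.1, h5 _ (Finset.mem_image_of_mem _ hp)⟩

/-- Congruences induced by different factors always permute. -/
theorem permAB {α : A → A → Prop} {δ : B → B → Prop} (hα : LatCon A α) (hδ : LatCon B δ)
    {H J K : LT A B} (hHJ : H ≤ J) (hJK : J ≤ K) (h1 : LeA α J H) (h2 : LeB δ K J) :
    ∃ D, H ≤ D ∧ D ≤ K ∧ LeB δ D H ∧ LeA α K D := by
  classical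
  obtain ⟨F, hFK, hF⟩ := exists_gen K
  have key : ∀ p : A × B, ∃ z, p ∈ F →
      z ≤ p.1 ∧ α p.1 z ∧ ∃ y, δ p.2 y ∧ (z, y) ∈ H.1 := by
    intro p
    by_cases hp : p ∈ F
    · obtain ⟨y', h3, h4, h5⟩ := h2.exists_le hδ (hFK p hp)
      obtain ⟨x', h6, h7, h8⟩ := h1.exists_le hα h5
      exact ⟨x', fun _ => ⟨h6, hα.1.symm h7, y', hδ.1.symm h4, h8⟩⟩
    · exact ⟨p.1, fun h => absurd h hp⟩
  choose z hz using key
  obtain ⟨D, h3, h4, h5, -, h6⟩ := exists_adjoin H K (hHJ.trans hJK)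
    (F.image fun p => (z p, p.2)) (by
      intro q hq
      obtain ⟨p, hp, rfl⟩ := Finset.mem_image.1 hq
      exact mem_down (hz p hp).1 le_rfl (hFK p hp))
  refine ⟨D, h3, h4, h6 δ hδ ?_, hF.leA hα ?_⟩
  · intro q hq
    obtain ⟨p, hp, rfl⟩ := Finset.mem_image.1 hq
    exact (hz p hp).2.2
  · intro p hp
    exact ⟨z p, (hz p hp).2.1, h5 _ (Finset.mem_image_of_mem _ hp)⟩

theorem permBB (hB : PermCon B) {β δ : B → B → Prop} (hβ : LatCon B β) (hδ : LatCon B δ)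
    {H J K : LT A B} (hHJ : H ≤ J) (hJK : J ≤ K) (h1 : LeB β J H) (h2 : LeB δ K J) :
    ∃ D, H ≤ D ∧ D ≤ K ∧ LeB δ D H ∧ LeB β K D := by
  obtain ⟨D, h3, h4, h5, h6⟩ := permAA hB hβ hδ (tr_le.2 hHJ) (tr_le.2 hJK) h1 h2
  refine ⟨tr D, ?_, ?_, ?_, ?_⟩
  · rwa [← tr_le, tr_tr]
  · rwa [← tr_le, tr_tr]
  · unfold LeB; rwa [tr_tr]
  · unfold LeB; rwa [tr_tr]

theorem permBA {β : B → B → Prop} {γ : A → A → Prop} (hβ : LatCon B β) (hγ : LatCon A γ)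
    {H J K : LT A B} (hHJ : H ≤ J) (hJK : J ≤ K) (h1 : LeB β J H) (h2 : LeA γ K J) :
    ∃ D, H ≤ D ∧ D ≤ K ∧ LeA γ D H ∧ LeB β K D := by
  obtain ⟨D, h3, h4, h5, h6⟩ := permAB hβ hγ (tr_le.2 hHJ) (tr_le.2 hJK) h1
    (show LeB γ (tr K) (tr J) by unfold LeB; rwa [tr_tr, tr_tr])
  refine ⟨tr D, ?_, ?_, ?_, ?_⟩
  · rwa [← tr_le, tr_tr]
  · rwa [← tr_le, tr_tr]
  · unfold LeB at h5; rwa [tr_tr] at h5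
  · unfold LeB; rwa [tr_tr]

/-- Intersections of a congruence induced by `A` and one induced by `B` permute. -/
theorem perm_inter (hA : PermCon A) (hB : PermCon B) {α γ : A → A → Prop} {β δ : B → B → Prop}
    (hα : LatCon A α) (hγ : LatCon A γ) (hβ : LatCon B β) (hδ : LatCon B δ)
    {H J K : LT A B} (hHJ : H ≤ J) (hJK : J ≤ K) (h1 : LeA α J H) (h2 : LeB β J H)
    (h3 : LeA γ K J) (h4 : LeB δ K J) :
    ∃ D, H ≤ D ∧ D ≤ K ∧ (LeA γ D H ∧ LeB δ D H) ∧ LeA α K D ∧ LeB β K D := by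
  obtain ⟨D₁, a1, a2, a3, a4⟩ := permAA hA hα hγ hHJ hJK h1 h3
  obtain ⟨D₂, b1, b2, b3, b4⟩ := permAB hα hδ hHJ hJK h1 h4
  obtain ⟨D₃, c1, c2, c3, c4⟩ := permBA hβ hγ hHJ hJK h2 h3
  obtain ⟨D₄, d1, d2, d3, d4⟩ := permBB hB hβ hδ hHJ hJK h2 h4
  refine ⟨(D₁ ⊓ D₂) ⊔ (D₃ ⊓ D₄), le_sup_of_le_left (le_inf a1 b1),
    sup_le (inf_le_of_left_le a2) (inf_le_of_left_le c2), ⟨?_, ?_⟩, ?_, ?_⟩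
  · exact LeA.sup hγ (a3.mono inf_le_left le_rfl) (c3.mono inf_le_left le_rfl)
  · exact LeB.sup hδ (b3.mono inf_le_right le_rfl) (d3.mono inf_le_right le_rfl)
  · exact (LeA.inf hα a4 b4).mono le_rfl le_sup_left
  · exact (LeB.inf hβ c4 d4).mono le_rfl le_sup_right

end Perm

/-! ### Every congruence is generated by intersections of induced congruences -/

section Generation

variable {A B : Type*} [Lattice A] [Lattice B]

/-- Modulo `Θ`, the points `(a, d)` and `(c, b)` force the point `(a, b)`; for `c ≤ a` and `d ≤ b`
this is the congruence `(a ⊠ d) ⊔ (c ⊠ b) ≡ a ⊠ b`, stated so as to make sense without zeros. -/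
def Fills (Θ : LT A B → LT A B → Prop) (c a : A) (d b : B) : Prop :=
  ∀ H : LT A B, (a, d) ∈ H.1 → (c, b) ∈ H.1 → ∃ K, H ≤ K ∧ Θ H K ∧ (a, b) ∈ K.1

theorem Fills.inf {Θ : LT A B → LT A B → Prop} (hΘ : LatCon (LT A B) Θ) {c a : A} {d b : B}
    (hca : c ≤ a) (hdb : d ≤ b) (h : Fills Θ c a d b) (t : A) :
    Fills Θ (c ⊓ t) (a ⊓ t) d b := by
  intro H h1 h2
  obtain ⟨X, hX, hXH⟩ := exists_mix H H (a ⊓ t) b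
  obtain ⟨Y, hY, -⟩ := exists_mix H H a b
  obtain ⟨G, hG⟩ := exists_inter_box Y c d
  obtain ⟨K, hGK, hGK', hK⟩ := h G ((hG _ _).2 ⟨mem_down le_rfl hdb hY, Or.inr le_rfl⟩)
    ((hG _ _).2 ⟨mem_down hca le_rfl hY, Or.inl le_rfl⟩)
  have hle : X ⊓ G ≤ H := by
    refine le_def.2 fun x y hxy => ?_
    obtain ⟨hx, hg⟩ := mem_inf.1 hxy
    rcases hXH x y hx with hx | ⟨hx1, hx2⟩
    · exact hx.1
    · rcases ((hG x y).1 hg).2 with hg | hg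
      · exact mem_down (le_inf hg (hx1.trans inf_le_right)) hx2 h2
      · exact mem_down hx1 hg h1
  refine ⟨H ⊔ (X ⊓ K), le_sup_left, ?_, ?_⟩
  · have := con_sup hΘ H (con_inf hΘ X hGK')
    rwa [sup_eq_left.2 hle] at this
  · exact (le_sup_right : X ⊓ K ≤ H ⊔ (X ⊓ K))
      (mem_inf.2 ⟨hX, mem_down inf_le_left le_rfl hK⟩)

/-- For fixed `d ≤ b`, the relation `Fills Θ · · d b` comes from a congruence of `A`. -/
theorem fills_con {Θ : LT A B → LT A B → Prop} (hΘ : LatCon (LT A B) Θ) {d b : B} (hdb : d ≤ b) :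
    LatCon A fun x y => Fills Θ (x ⊓ y) (x ⊔ y) d b := by
  let r : A → A → Prop := fun x y => Fills Θ (x ⊓ y) (x ⊔ y) d b
  have hr : ∀ x y, x ≤ y → (r x y ↔ Fills Θ x y d b) := fun x y hxy => by
    simp only [r, inf_eq_left.2 hxy, sup_eq_right.2 hxy]
  have : Std.Refl r := ⟨fun x => (hr x x le_rfl).2 fun H _ h => ⟨H, le_rfl, con_refl hΘ H, h⟩⟩
  let con : LatticeCon A := LatticeCon.mk' r
    (fun x y => (hr _ _ inf_le_sup).symm)
    (by
      intro x y z hxy hyz h1 h2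
      rw [hr _ _ hxy] at h1
      rw [hr _ _ hyz] at h2
      rw [hr _ _ (hxy.trans hyz)]
      intro H h3 h4
      obtain ⟨K, h5, h6, h7⟩ := h1 H (mem_down hyz le_rfl h3) h4
      obtain ⟨K', h8, h9, h10⟩ := h2 K (h5 h3) h7
      exact ⟨K', h5.trans h8, hΘ.1.trans h6 h9, h10⟩)
    (by
      intro x y t hxy h
      rw [hr _ _ hxy] at h
      rw [hr _ _ (inf_le_inf_right t hxy), hr _ _ (sup_le_sup_right hxy t)]
      refine ⟨h.inf hΘ hxy hdb t, fun H h1 h2 => ?_⟩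
      obtain ⟨K, h5, h6, h7⟩ := h H (mem_down le_sup_left le_rfl h1)
        (mem_down le_sup_left le_rfl h2)
      exact ⟨K, h5, h6, mem_sup_left h7 (h5 (mem_down le_sup_right le_rfl h2))⟩)
  exact ⟨con.iseqv, fun _ _ _ _ h1 h2 => ⟨con.sup h1 h2, con.inf h1 h2⟩⟩

theorem tr_con {Θ : LT A B → LT A B → Prop} (hΘ : LatCon (LT A B) Θ) :
    LatCon (LT B A) fun H K => Θ (tr H) (tr K) := by
  refine ⟨⟨fun H => hΘ.1.refl _, fun h => hΘ.1.symm h, fun h h' => hΘ.1.trans h h'⟩, ?_⟩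
  intro a b c d h1 h2
  simp only [tr_sup, tr_inf]
  exact hΘ.2 _ _ _ _ h1 h2

theorem Fills.tr {Θ : LT A B → LT A B → Prop} {c a : A} {d b : B} (h : Fills Θ c a d b) :
    Fills (fun H K : LT B A => Θ (tr H) (tr K)) d b c a := by
  intro H h1 h2
  obtain ⟨K, h3, h4, h5⟩ := h (LTens.tr H) (mem_tr.2 h2) (mem_tr.2 h1)
  refine ⟨LTens.tr K, ?_, ?_, mem_tr.2 h5⟩
  · rwa [← tr_le, tr_tr]
  · change Θ (LTens.tr H) (LTens.tr (LTens.tr K))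
    rwa [tr_tr]

/-- `Fills` propagates from a pair of intervals to the principal congruences they generate. -/
theorem Fills.conGen {Θ : LT A B → LT A B → Prop} (hΘ : LatCon (LT A B) Θ) {c a x' x : A}
    {d b y' y : B} (hca : c ≤ a) (hdb : d ≤ b) (hx : x' ≤ x) (hy : y' ≤ y)
    (h : Fills Θ c a d b) (hα : conGen c a x' x) (hβ : conGen d b y' y) :
    Fills Θ x' x y' y := by
  have h1 : Fills Θ x' x d b := by
    have := hα _ (fills_con hΘ hdb) (by rwa [inf_eq_left.2 hca, sup_eq_right.2 hca])
    rwa [inf_eq_left.2 hx, sup_eq_right.2 hx] at this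
  have h2 := hβ _ (fills_con (tr_con hΘ) hx)
    (by rw [inf_eq_left.2 hdb, sup_eq_right.2 hdb]; exact h1.tr)
  rw [inf_eq_left.2 hy, sup_eq_right.2 hy] at h2
  have h3 := h2.tr
  simpa only [tr_tr] using h3

/-- If `Fills Θ c a d b` holds, then `Θ` contains the intersection of the congruences induced by
the principal congruences of `(c, a)` and `(d, b)`. -/
theorem Fills.rel {Θ : LT A B → LT A B → Prop} (hΘ : LatCon (LT A B) Θ) {c a : A} {d b : B}
    (hca : c ≤ a) (hdb : d ≤ b) (h : Fills Θ c a d b) {H K : LT A B} (hHK : H ≤ K)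
    (h1 : LeA (LTens.conGen c a) K H) (h2 : LeB (LTens.conGen d b) K H) : Θ H K := by
  classical
  obtain ⟨F, hFK, hF⟩ := exists_gen K
  have key : ∀ P ⊆ F, ∃ G, H ≤ G ∧ Θ H G ∧ ∀ p ∈ P, p ∈ G.1 := by
    intro P
    induction P using Finset.induction_on with
    | empty => exact fun _ => ⟨H, le_rfl, con_refl hΘ H, by simp⟩
    | insert p P _ ih =>
      intro hP
      obtain ⟨G, h3, h4, h5⟩ := ih ((Finset.subset_insert _ _).trans hP)
      have hp := hFK p (hP (Finset.mem_insert_self _ _))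
      obtain ⟨x', h6, h7, h8⟩ := h1.exists_le (conGen_con c a) hp
      obtain ⟨y', h9, h10, h11⟩ := h2.exists_le (conGen_con d b) hp
      obtain ⟨G', h12, h13, h14⟩ :=
        Fills.conGen hΘ hca hdb h6 h9 h h7 h10 G (h3 h11) (h3 h8)
      exact ⟨G', h3.trans h12, hΘ.1.trans h4 h13,
        Finset.forall_mem_insert _ _ _ |>.2 ⟨h14, fun q hq => h12 (h5 q hq)⟩⟩
  obtain ⟨G, h3, h4, h5⟩ := key F subset_rfl
  have := con_inf hΘ K h4
  rwa [inf_eq_right.2 hHK, inf_eq_left.2 (hF.le h5)] at this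

/-- `H ≤ K` are related by the intersection of two congruences, one induced by a congruence `α`
of `A` and one by a congruence `β` of `B`, and that intersection is contained in `Θ`. -/
def Step (Θ : LT A B → LT A B → Prop) (H K : LT A B) : Prop :=
  H ≤ K ∧ ∃ (α : A → A → Prop) (β : B → B → Prop), LatCon A α ∧ LatCon B β ∧
    (∀ H K : LT A B, H ≤ K → LeA α K H → LeB β K H → Θ H K) ∧ LeA α K H ∧ LeB β K H

theorem step_le {Θ : LT A B → LT A B → Prop} {H K : LT A B}
    (h : Relation.ReflTransGen (Step Θ) H K) : H ≤ K := by
  induction h with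
  | refl => exact le_rfl
  | tail _ h ih => exact ih.trans h.1

theorem step_rel {Θ : LT A B → LT A B → Prop} (hΘ : LatCon (LT A B) Θ) {H K : LT A B}
    (h : Relation.ReflTransGen (Step Θ) H K) : Θ H K := by
  induction h with
  | refl => exact con_refl hΘ _
  | tail _ h ih =>
    obtain ⟨h1, α, β, -, -, h2, h3, h4⟩ := h
    exact hΘ.1.trans ih (h2 _ _ h1 h3 h4)

/-- If `G ≤ K` are congruent modulo `Θ`, `G ⊆ a □ b` and `(x, y) ∈ K`, then `Θ` fills the pair of
intervals `[a ⊓ x, x]`, `[b ⊓ y, y]`. -/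
theorem fills_of_rel {Θ : LT A B → LT A B → Prop} (hΘ : LatCon (LT A B) Θ) {G K : LT A B}
    (hGK : G ≤ K) (h : Θ G K) {a x : A} {b y : B} (hG : InBox G a b) (hxy : (x, y) ∈ K.1) :
    Fills Θ (a ⊓ x) x (b ⊓ y) y := by
  intro H h1 h2
  obtain ⟨X, hX, hXH⟩ := exists_mix H G x y
  have hXK : X ≤ K := le_def.2 fun u v huv => by
    rcases hXH u v huv with h | h
    · exact hGK h.2
    · exact mem_down h.1 h.2 hxy
  have hle : X ⊓ G ≤ H := le_def.2 fun u v huv => by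
    obtain ⟨hu, hg⟩ := mem_inf.1 huv
    rcases hXH u v hu with h | h
    · exact h.1
    · rcases hG u v hg with h' | h'
      · exact mem_down (le_inf h' h.1) h.2 h2
      · exact mem_down h.1 (le_inf h' h.2) h1
  refine ⟨H ⊔ X, le_sup_left, ?_, (le_sup_right : X ≤ H ⊔ X) hX⟩
  have := con_sup hΘ H (con_inf hΘ X h)
  rwa [sup_eq_left.2 hle, inf_eq_left.2 hXK] at this

/-- A point of `K` is reached from `G` by steps: with `X` a mixed tensor at `(x, y)` and `G` the
intersection of the boxes `aᵢ □ bᵢ`, drop these boxes one by one from `G ⊔ (X ∩ ⋂ (aᵢ □ bᵢ)) = G`,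
arriving at `G ⊔ X`. -/
theorem exists_steps_point {Θ : LT A B → LT A B → Prop} (hΘ : LatCon (LT A B) Θ) {G K : LT A B}
    (hGK : G ≤ K) (h : Θ G K) {x : A} {y : B} (hxy : (x, y) ∈ K.1) :
    ∃ G', Relation.ReflTransGen (Step Θ) G G' ∧ G' ≤ K ∧ (x, y) ∈ G'.1 := by
  classical
  obtain ⟨X, hX, hXG⟩ := exists_mix G G x y
  have hXK : X ≤ K := le_def.2 fun u v huv => by
    rcases hXG u v huv with h | h
    · exact hGK h.1
    · exact mem_down h.1 h.2 hxy
  refine ⟨G ⊔ X, ?_, sup_le hGK hXK, (le_sup_right : X ≤ G ⊔ X) hX⟩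
  obtain ⟨I, -, hI⟩ := exists_boxes G
  have key : ∀ J ⊆ I, ∃ Y : LT A B,
      (∀ u v, (u, v) ∈ Y.1 ↔ (u, v) ∈ X.1 ∧ ∀ p ∈ J, u ≤ p.1 ∨ v ≤ p.2) ∧
      Relation.ReflTransGen (Step Θ) (G ⊔ Y) (G ⊔ X) := by
    intro J
    induction J using Finset.induction_on with
    | empty => exact fun _ => ⟨X, by simp, Relation.ReflTransGen.refl⟩
    | insert p J _ ih =>
      intro hJ
      obtain ⟨Y, hY, hstep⟩ := ih ((Finset.subset_insert _ _).trans hJ)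
      obtain ⟨Z, hZ⟩ := exists_inter_box Y p.1 p.2
      have hGp : InBox G p.1 p.2 := fun u v huv =>
        (hI u v).1 huv p (hJ (Finset.mem_insert_self _ _))
      have hfill := fills_of_rel hΘ hGK h hGp hxy
      have hα := conGen_con (p.1 ⊓ x) x
      have hβ := conGen_con (p.2 ⊓ y) y
      refine ⟨Z, fun u v => ?_, Relation.ReflTransGen.head ⟨?_, _, _, hα, hβ,
        fun _ _ hle h1 h2 => hfill.rel hΘ inf_le_right inf_le_right hle h1 h2,
        LeA.sup hα (leA_of_le hα le_sup_left) (LeA.mono ?_ le_rfl le_sup_right),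
        LeB.sup hβ (leB_of_le hβ le_sup_left) (LeB.mono ?_ le_rfl le_sup_right)⟩ hstep⟩
      · rw [hZ, hY, Finset.forall_mem_insert, and_assoc]
        exact and_congr_right fun _ => and_comm
      · exact sup_le_sup_left (le_def.2 fun u v huv => ((hZ u v).1 huv).1) _
      · intro u v huv
        rcases hXG u v ((hY u v).1 huv).1 with h1 | ⟨h1, -⟩
        · exact ⟨u, hα.1.refl u, (hZ u v).2 ⟨huv, hGp u v h1.1⟩⟩
        · refine ⟨u ⊓ p.1, ?_, (hZ _ _).2 ⟨mem_down inf_le_left le_rfl huv, Or.inl inf_le_right⟩⟩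
          have := con_inf hα u (hα.1.symm (conGen_self (p.1 ⊓ x) x))
          rwa [inf_eq_left.2 h1, inf_left_comm, inf_eq_left.2 h1, inf_comm p.1 u] at this
      · rw [leB_iff]
        intro u v huv
        rcases hXG u v ((hY u v).1 huv).1 with h1 | ⟨-, h1⟩
        · exact ⟨v, hβ.1.refl v, (hZ u v).2 ⟨huv, hGp u v h1.1⟩⟩
        · refine ⟨v ⊓ p.2, ?_, (hZ _ _).2 ⟨mem_down le_rfl inf_le_left huv, Or.inr inf_le_right⟩⟩
          have := con_inf hβ v (hβ.1.symm (conGen_self (p.2 ⊓ y) y))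
          rwa [inf_eq_left.2 h1, inf_left_comm, inf_eq_left.2 h1, inf_comm p.2 v] at this
  obtain ⟨Y, hY, hstep⟩ := key I subset_rfl
  have hYG : Y ≤ G := le_def.2 fun u v huv => (hI u v).2 ((hY u v).1 huv).2
  rwa [sup_eq_left.2 hYG] at hstep

theorem exists_steps {Θ : LT A B → LT A B → Prop} (hΘ : LatCon (LT A B) Θ) {H K : LT A B}
    (hHK : H ≤ K) (h : Θ H K) : Relation.ReflTransGen (Step Θ) H K := by
  classical
  obtain ⟨F, hFK, hF⟩ := exists_gen K
  have key : ∀ P ⊆ F, ∃ G, Relation.ReflTransGen (Step Θ) H G ∧ G ≤ K ∧ ∀ p ∈ P, p ∈ G.1 := by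
    intro P
    induction P using Finset.induction_on with
    | empty => exact fun _ => ⟨H, Relation.ReflTransGen.refl, hHK, by simp⟩
    | insert p P _ ih =>
      intro hP
      obtain ⟨G, h1, h2, h3⟩ := ih ((Finset.subset_insert _ _).trans hP)
      obtain ⟨G', h4, h5, h6⟩ := exists_steps_point hΘ h2
        (hΘ.1.trans (hΘ.1.symm (step_rel hΘ h1)) h) (hFK p (hP (Finset.mem_insert_self _ _)))
      exact ⟨G', h1.trans h4, h5,
        Finset.forall_mem_insert _ _ _ |>.2 ⟨h6, fun q hq => step_le h4 (h3 q hq)⟩⟩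
  obtain ⟨G, h1, h2, h3⟩ := key F subset_rfl
  rwa [le_antisymm h2 (hF.le h3)] at h1

theorem step_comm (hA : PermCon A) (hB : PermCon B) {Θ Ψ : LT A B → LT A B → Prop}
    {H J K : LT A B} (h1 : Step Θ H J) (h2 : Step Ψ J K) : ∃ D, Step Ψ H D ∧ Step Θ D K := by
  obtain ⟨hHJ, α, β, hα, hβ, hΘ, h3, h4⟩ := h1
  obtain ⟨hJK, γ, δ, hγ, hδ, hΨ, h5, h6⟩ := h2
  obtain ⟨D, d1, d2, d3, d4⟩ := perm_inter hA hB hα hγ hβ hδ hHJ hJK h3 h4 h5 h6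
  exact ⟨D, ⟨d1, γ, δ, hγ, hδ, hΨ, d3⟩, d2, α, β, hα, hβ, hΘ, d4⟩

theorem reflTransGen_comm {X : Type*} {r s : X → X → Prop}
    (h : ∀ x y z, r x y → s y z → ∃ w, s x w ∧ r w z) {x y z : X}
    (h1 : Relation.ReflTransGen r x y) (h2 : Relation.ReflTransGen s y z) :
    ∃ w, Relation.ReflTransGen s x w ∧ Relation.ReflTransGen r w z := by
  have one : ∀ {x y z}, r x y → Relation.ReflTransGen s y z →
      ∃ w, Relation.ReflTransGen s x w ∧ r w z := by
    intro x y z hxy hyz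
    induction hyz with
    | refl => exact ⟨x, Relation.ReflTransGen.refl, hxy⟩
    | tail _ hs ih =>
      obtain ⟨w, h3, h4⟩ := ih
      obtain ⟨w', h5, h6⟩ := h _ _ _ h4 hs
      exact ⟨w', h3.tail h5, h6⟩
  induction h1 using Relation.ReflTransGen.head_induction_on with
  | refl => exact ⟨z, h2, Relation.ReflTransGen.refl⟩
  | head hxy _ ih =>
    obtain ⟨w, h3, h4⟩ := ih
    obtain ⟨w', h5, h6⟩ := one hxy h3
    exact ⟨w', h5, h4.head h6⟩

theorem chain_perm (hA : PermCon A) (hB : PermCon B) {Θ Ψ : LT A B → LT A B → Prop}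
    (hΘ : LatCon (LT A B) Θ) (hΨ : LatCon (LT A B) Ψ) (H J K : LT A B) (hHJ : H ≤ J)
    (hJK : J ≤ K) (h1 : Θ H J) (h2 : Ψ J K) : ∃ D, H ≤ D ∧ D ≤ K ∧ Ψ H D ∧ Θ D K := by
  obtain ⟨D, h3, h4⟩ := reflTransGen_comm (fun _ _ _ => step_comm hA hB)
    (exists_steps hΘ hHJ h1) (exists_steps hΨ hJK h2)
  exact ⟨D, step_le h3, step_le h4, step_rel hΨ h3, step_rel hΘ h4⟩

theorem latCon_of_posetLatCon {Θ : LT A B → LT A B → Prop} (h : PosetLatCon Θ) :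
    LatCon (LT A B) Θ :=
  ⟨h.1, fun a b c d h1 h2 => ⟨h.2.1 a b c d _ _ h1 h2 isLUB_pair isLUB_pair,
    h.2.2 a b c d _ _ h1 h2 isGLB_pair isGLB_pair⟩⟩

end Generation

end LTens

/-- If `A` and `B` are lattices with permutable congruences and `A ⊠ B` is nonempty,
then `A ⊠ B` has permutable congruences. -/
theorem ltens_permutable_congruences
    (A B : Type*) [Lattice A] [Lattice B]
    (hne : (ltens A B).Nonempty)
    (hA : ∀ θ ψ : A → A → Prop, LatCon A θ → LatCon A ψ →
      ∀ a b : A, (∃ c, θ a c ∧ ψ c b) ↔ (∃ c, ψ a c ∧ θ c b))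
    (hB : ∀ θ ψ : B → B → Prop, LatCon B θ → LatCon B ψ →
      ∀ a b : B, (∃ c, θ a c ∧ ψ c b) ↔ (∃ c, ψ a c ∧ θ c b)) :
    ∀ Θ Ψ : {H // H ∈ ltens A B} → {H // H ∈ ltens A B} → Prop,
      PosetLatCon Θ → PosetLatCon Ψ →
      ∀ H K : {H // H ∈ ltens A B},
        (∃ J, Θ H J ∧ Ψ J K) ↔ (∃ J, Ψ H J ∧ Θ J K) := by
  have key : ∀ Θ Ψ : LTens.LT A B → LTens.LT A B → Prop, PosetLatCon Θ → PosetLatCon Ψ →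
      ∀ H K, (∃ J, Θ H J ∧ Ψ J K) → ∃ J, Ψ H J ∧ Θ J K := by
    rintro Θ Ψ hΘ hΨ H K ⟨J, h1, h2⟩
    have hΘ' := LTens.latCon_of_posetLatCon hΘ
    have hΨ' := LTens.latCon_of_posetLatCon hΨ
    exact LTens.permute_of_chain hΘ' hΨ' (LTens.chain_perm hA hB hΘ' hΨ')
      (LTens.chain_perm hA hB hΨ' hΘ') h1 h2
  exact fun Θ Ψ hΘ hΨ H K => ⟨key Θ Ψ hΘ hΨ H K, key Ψ Θ hΨ hΘ H K⟩
end

section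
/- Let S be a simple bounded lattice (S has a least element 0_S and a greatest element, and S has exactly two lattice congruences) and let L be a lattice. Then the map j : L → S ⊠ L defined by j(x) = 0_S □ x is an injective lattice homomorphism which is congruence-preserving: for every lattice congruence θ of L there is exactly one lattice congruence Θ of S ⊠ L such that Θ(j x, j y) holds if and only if θ(x, y) holds, for all x, y ∈ L. -/
namespace SimpleTensor

/-! ### Congruences and finite joins and meets -/

section Con

variable {M : Type*} [Lattice M] {θ : M → M → Prop}

lemma con_sup' (hθ : LatCon M θ) {ι : Type*} {s : Finset ι} (hs : s.Nonempty) {f g : ι → M}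
    (h : ∀ i ∈ s, θ (f i) (g i)) : θ (s.sup' hs f) (s.sup' hs g) := by
  induction hs using Finset.Nonempty.cons_induction with
  | singleton a => simpa using h a (by simp)
  | cons a s ha hs ih =>
    rw [Finset.sup'_cons hs, Finset.sup'_cons hs]
    exact (hθ.2 _ _ _ _ (h a (by simp)) (ih fun i hi => h i (by simp [hi]))).1

lemma con_inf' (hθ : LatCon M θ) {ι : Type*} {s : Finset ι} (hs : s.Nonempty) {f g : ι → M}
    (h : ∀ i ∈ s, θ (f i) (g i)) : θ (s.inf' hs f) (s.inf' hs g) := by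
  induction hs using Finset.Nonempty.cons_induction with
  | singleton a => simpa using h a (by simp)
  | cons a s ha hs ih =>
    rw [Finset.inf'_cons hs, Finset.inf'_cons hs]
    exact (hθ.2 _ _ _ _ (h a (by simp)) (ih fun i hi => h i (by simp [hi]))).2

lemma posetLatCon_iff : PosetLatCon θ ↔ LatCon M θ := by
  constructor
  · rintro ⟨he, hs, hi⟩
    exact ⟨he, fun a b c d h h' =>
      ⟨hs a b c d _ _ h h' isLUB_pair isLUB_pair, hi a b c d _ _ h h' isGLB_pair isGLB_pair⟩⟩
  · rintro ⟨he, h⟩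
    refine ⟨he, fun a b c d s t h1 h2 hs ht => ?_, fun a b c d s t h1 h2 hs ht => ?_⟩
    · rw [hs.unique isLUB_pair, ht.unique isLUB_pair]
      exact (h a b c d h1 h2).1
    · rw [hs.unique isGLB_pair, ht.unique isGLB_pair]
      exact (h a b c d h1 h2).2

end Con

variable {S L : Type*} [Lattice S] [OrderBot S] [OrderTop S] [Lattice L]

set_option linter.unusedSectionVars false

/-! ### Confined elements -/

/-- With `S` bounded, confinement amounts to the presence of a factor `⊥ □ c`. -/
lemma mem_ltens_iff {H : Set (S × L)} :
    H ∈ ltens S L ↔ ∃ F : Finset (S × L), (∃ c, (⊥, c) ∈ F) ∧ H = ⋂ p ∈ F, boxe S L p.1 p.2 := by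
  classical
  constructor
  · rintro ⟨⟨F, -, rfl⟩, a, c, h⟩
    refine ⟨insert (⊥, c) F, ⟨c, by simp⟩, ?_⟩
    rw [Finset.set_biInter_insert, eq_comm, Set.inter_eq_right]
    intro p hp
    rcases h hp with h | h | h
    · exact Or.inr h.2
    · exact Or.inl (h _)
    · exact Or.inr (h _)
  · rintro ⟨F, ⟨c, hc⟩, rfl⟩
    refine ⟨⟨F, ⟨_, hc⟩, rfl⟩, ⊤, c, fun p hp => ?_⟩
    rcases Set.mem_iInter₂.1 hp _ hc with h | h
    · exact Or.inr (Or.inl (isBot_iff_eq_bot.2 (le_bot_iff.1 h)))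
    · exact Or.inl ⟨le_top, h⟩

lemma boxe_mem (x : L) : boxe S L ⊥ x ∈ ltens S L :=
  mem_ltens_iff.2 ⟨{(⊥, x)}, ⟨x, by simp⟩, by simp⟩

lemma inter_mem {H K : Set (S × L)} (hH : H ∈ ltens S L) (hK : K ∈ ltens S L) :
    H ∩ K ∈ ltens S L := by
  classical
  obtain ⟨F, ⟨c, hc⟩, rfl⟩ := mem_ltens_iff.1 hH
  obtain ⟨G, -, rfl⟩ := mem_ltens_iff.1 hK
  exact mem_ltens_iff.2 ⟨F ∪ G, ⟨c, by simp [hc]⟩, by rw [Finset.set_biInter_inter]⟩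

lemma bot_mem {H : Set (S × L)} (hH : H ∈ ltens S L) (y : L) : ((⊥ : S), y) ∈ H := by
  obtain ⟨F, -, rfl⟩ := mem_ltens_iff.1 hH
  exact Set.mem_iInter₂.2 fun p _ => Or.inl bot_le

lemma down {H : Set (S × L)} (hH : H ∈ ltens S L) {x x' : S} {y y' : L} (h : (x, y) ∈ H)
    (hx : x' ≤ x) (hy : y' ≤ y) : (x', y') ∈ H := by
  obtain ⟨F, -, rfl⟩ := mem_ltens_iff.1 hH
  exact Set.mem_iInter₂.2 fun p hp =>
    (Set.mem_iInter₂.1 h p hp).imp (fun h => hx.trans h) (fun h => hy.trans h)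

lemma sup_left_mem {H : Set (S × L)} (hH : H ∈ ltens S L) {x x' : S} {y : L} (h : (x, y) ∈ H)
    (h' : (x', y) ∈ H) : (x ⊔ x', y) ∈ H := by
  obtain ⟨F, -, rfl⟩ := mem_ltens_iff.1 hH
  refine Set.mem_iInter₂.2 fun p hp => ?_
  rcases Set.mem_iInter₂.1 h p hp with h1 | h1
  · rcases Set.mem_iInter₂.1 h' p hp with h2 | h2
    · exact Or.inl (sup_le h1 h2)
    · exact Or.inr h2
  · exact Or.inr h1

lemma sup_right_mem {H : Set (S × L)} (hH : H ∈ ltens S L) {x : S} {y y' : L} (h : (x, y) ∈ H)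
    (h' : (x, y') ∈ H) : (x, y ⊔ y') ∈ H := by
  obtain ⟨F, -, rfl⟩ := mem_ltens_iff.1 hH
  refine Set.mem_iInter₂.2 fun p hp => ?_
  rcases Set.mem_iInter₂.1 h p hp with h1 | h1
  · exact Or.inl h1
  · rcases Set.mem_iInter₂.1 h' p hp with h2 | h2
    · exact Or.inl h2
    · exact Or.inr (sup_le h1 h2)

/-! ### Values -/

open Classical in
/-- The section at `x ≠ ⊥` of a finite intersection of boxes `aᵢ □ bᵢ`, one of the `aᵢ` being `⊥`,
is the principal ideal generated by the meet of the `bᵢ` with `x ≰ aᵢ`. -/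
lemma section_iInter {ι : Type*} {I : Finset ι} {a : ι → S} {x : S} (hx : x ≠ ⊥)
    (h0 : ∃ i ∈ I, a i = ⊥) :
    ∃ hne : (I.filter fun i => ¬ x ≤ a i).Nonempty, ∀ (b : ι → L) (y : L),
      (x, y) ∈ (⋂ i ∈ I, boxe S L (a i) (b i)) ↔ y ≤ (I.filter fun i => ¬ x ≤ a i).inf' hne b := by
  obtain ⟨i, hi, hai⟩ := h0
  have hne : (I.filter fun i => ¬ x ≤ a i).Nonempty := ⟨i, by simp [hi, hai, hx]⟩
  refine ⟨hne, fun b y => ?_⟩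
  rw [Finset.le_inf'_iff, Set.mem_iInter₂]
  simp only [boxe, Set.mem_ofPred_eq, Finset.mem_filter]
  exact ⟨fun h i hi => (h i hi.1).resolve_left hi.2, fun h i hi => or_iff_not_imp_left.2 fun h' =>
    h i ⟨hi, h'⟩⟩

lemma exists_val (H : {H // H ∈ ltens S L}) :
    ∃ f : S → L, ∀ x, x ≠ ⊥ → ∀ y, (x, y) ∈ H.1 ↔ y ≤ f x := by
  classical
  obtain ⟨F, ⟨c, hc⟩, hF⟩ := mem_ltens_iff.1 H.2
  have : ∀ x : S, ∃ v, x ≠ ⊥ → ∀ y, (x, y) ∈ H.1 ↔ y ≤ v := by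
    intro x
    by_cases hx : x = ⊥
    · exact ⟨c, fun h => absurd hx h⟩
    · obtain ⟨hne, h⟩ := section_iInter (L := L) (I := F) (a := Prod.fst) hx ⟨_, hc, rfl⟩
      exact ⟨_, fun _ y => by rw [hF]; exact h Prod.snd y⟩
  choose f hf using this
  exact ⟨f, hf⟩

/-- `val H x` is the generator of the principal ideal `{y | (x, y) ∈ H}` when `x ≠ ⊥`. At `x = ⊥`,
where the section is all of `L`, it is an arbitrary element. -/
noncomputable def val (H : {H // H ∈ ltens S L}) : S → L := (exists_val H).choose

lemma mem_iff (H : {H // H ∈ ltens S L}) {x : S} (hx : x ≠ ⊥) {y : L} :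
    (x, y) ∈ H.1 ↔ y ≤ val H x := (exists_val H).choose_spec x hx y

lemma val_mem (H : {H // H ∈ ltens S L}) (x : S) : (x, val H x) ∈ H.1 := by
  by_cases hx : x = ⊥
  · subst hx
    exact bot_mem H.2 _
  · exact (mem_iff H hx).2 le_rfl

lemma val_eq (H : {H // H ∈ ltens S L}) {x : S} (hx : x ≠ ⊥) {v : L}
    (h : ∀ y, (x, y) ∈ H.1 ↔ y ≤ v) : val H x = v :=
  eq_of_forall_le_iff fun y => by rw [← mem_iff H hx, h]

/-- If two confined elements are presented by the same `aᵢ` and by congruent `bᵢ`, their values are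
congruent. -/
lemma val_con {θ : L → L → Prop} (hθ : LatCon L θ) {H K : {H // H ∈ ltens S L}} {ι : Type*}
    {I : Finset ι} {a : ι → S} {b b' : ι → L} (h0 : ∃ i ∈ I, a i = ⊥)
    (hH : H.1 = ⋂ i ∈ I, boxe S L (a i) (b i)) (hK : K.1 = ⋂ i ∈ I, boxe S L (a i) (b' i))
    (h : ∀ i ∈ I, θ (b i) (b' i)) {x : S} (hx : x ≠ ⊥) : θ (val H x) (val K x) := by
  classical
  obtain ⟨hne, hv⟩ := section_iInter (L := L) hx h0
  rw [val_eq H hx fun y => by rw [hH]; exact hv b y, val_eq K hx fun y => by rw [hK]; exact hv b' y]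
  exact con_inf' hθ hne fun i hi => h i (Finset.mem_of_mem_filter i hi)

/-! ### Finite generation and joins -/

/-- `P` generates `H`: every section of `H` at `x ≠ ⊥` is contained in the section at some `p ∈ P`
with `x ≤ p`. -/
def Gen (P : Finset S) (H : Set (S × L)) : Prop :=
  ∀ x, x ≠ ⊥ → ∃ p ∈ P, x ≤ p ∧ ∀ y, (x, y) ∈ H → (p, y) ∈ H

lemma Gen.mono {P Q : Finset S} {H : Set (S × L)} (h : Gen P H) (hPQ : P ⊆ Q) : Gen Q H :=
  fun x hx => let ⟨p, hp, h'⟩ := h x hx; ⟨p, hPQ hp, h'⟩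

lemma exists_gen (H : {H // H ∈ ltens S L}) : ∃ P : Finset S, ⊥ ∉ P ∧ Gen P H.1 := by
  classical
  obtain ⟨F, -, hF⟩ := mem_ltens_iff.1 H.2
  refine ⟨(F.powerset.image fun I => I.inf Prod.fst).erase ⊥, by simp, fun x hx => ?_⟩
  -- the largest element lying below the same first coordinates as `x`
  have hle : x ≤ (F.filter fun i => x ≤ i.1).inf Prod.fst :=
    Finset.le_inf fun i hi => (Finset.mem_filter.1 hi).2
  refine ⟨(F.filter fun i => x ≤ i.1).inf Prod.fst, ?_, hle, fun y hy => ?_⟩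
  · rw [Finset.mem_erase]
    refine ⟨fun h => hx (le_bot_iff.1 (h ▸ hle)), Finset.mem_image.2 ⟨_, ?_, rfl⟩⟩
    exact Finset.mem_powerset.2 (Finset.filter_subset _ _)
  · rw [hF] at hy ⊢
    refine Set.mem_iInter₂.2 fun i hi => ?_
    rcases Set.mem_iInter₂.1 hy i hi with h | h
    · exact Or.inl (Finset.inf_le (Finset.mem_filter.2 ⟨hi, h⟩))
    · exact Or.inr h

open Classical in
/-- The box-product element generated by the pairs `(p, q p)`, `p ∈ P`, for a set `P` containing `⊤`.
Inserting `⊤` keeps the second join nonempty; it alters only the factors with `⊤ ∈ J`, and these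
are the whole of `S × L`. -/
def hull (P : Finset S) (q : S → L) : Set (S × L) :=
  ⋂ J ∈ P.powerset, boxe S L (J.sup id) ((insert ⊤ (P \ J)).sup' (Finset.insert_nonempty _ _) q)

lemma hull_mem (P : Finset S) (q : S → L) : hull P q ∈ ltens S L := by
  classical
  refine mem_ltens_iff.2 ⟨P.powerset.image fun J =>
    (J.sup id, (insert ⊤ (P \ J)).sup' (Finset.insert_nonempty _ _) q), ?_, ?_⟩
  · exact ⟨_, Finset.mem_image.2 ⟨∅, by simp, by simp; rfl⟩⟩
  · rw [Finset.set_biInter_finset_image]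
    rfl

lemma mem_hull {P : Finset S} {q : S → L} {p : S} (hp : p ∈ P) : (p, q p) ∈ hull P q := by
  classical
  refine Set.mem_iInter₂.2 fun J _ => ?_
  by_cases h : p ∈ J
  · exact Or.inl (Finset.le_sup (f := id) h)
  · exact Or.inr (Finset.le_sup' q (by simp [hp, h]))

lemma hull_subset {P : Finset S} {q : S → L} (hP : ⊤ ∈ P) {K : Set (S × L)} (hK : K ∈ ltens S L)
    (h : ∀ p ∈ P, (p, q p) ∈ K) : hull P q ⊆ K := by
  classical
  obtain ⟨F, -, rfl⟩ := mem_ltens_iff.1 hK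
  intro z hz
  refine Set.mem_iInter₂.2 fun i hi => ?_
  have h' : ∀ p ∈ P, p ≤ i.1 ∨ q p ≤ i.2 := fun p hp => Set.mem_iInter₂.1 (h p hp) i hi
  by_cases ht : (⊤ : S) ≤ i.1
  · exact Or.inl (le_top.trans ht)
  rcases Set.mem_iInter₂.1 hz (P.filter fun p => p ≤ i.1)
    (Finset.mem_powerset.2 (Finset.filter_subset _ _)) with h1 | h1
  · exact Or.inl (h1.trans (Finset.sup_le fun p hp => (Finset.mem_filter.1 hp).2))
  · refine Or.inr (h1.trans (Finset.sup'_le _ _ fun p hp => ?_))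
    rcases Finset.mem_insert.1 hp with rfl | hp
    · exact (h' _ hP).resolve_left ht
    · simp only [Finset.mem_sdiff, Finset.mem_filter, not_and] at hp
      exact (h' p hp.1).resolve_left (hp.2 hp.1)

lemma subset_of_gen {P : Finset S} {H : {H // H ∈ ltens S L}} (hP : ⊥ ∉ P) (hg : Gen P H.1)
    {K : Set (S × L)} (hK : K ∈ ltens S L) (h : ∀ p ∈ P, (p, val H p) ∈ K) : H.1 ⊆ K := by
  rintro ⟨x, y⟩ hxy
  by_cases hx : x = ⊥
  · subst hx
    exact bot_mem hK y
  · obtain ⟨p, hp, hxp, hy⟩ := hg x hx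
    have hp0 : p ≠ ⊥ := fun h => hP (h ▸ hp)
    exact down hK (h p hp) hxp ((mem_iff H hp0).1 (hy y hxy))

lemma isLUB_hull {P : Finset S} {H K : {H // H ∈ ltens S L}} (ht : ⊤ ∈ P) (hP : ⊥ ∉ P)
    (hH : Gen P H.1) (hK : Gen P K.1) :
    IsLUB {H, K} (⟨hull P fun p => val H p ⊔ val K p, hull_mem _ _⟩ : {H // H ∈ ltens S L}) := by
  have key : ∀ p ∈ P, (p, val H p ⊔ val K p) ∈ hull P fun p => val H p ⊔ val K p :=
    fun p hp => mem_hull (q := fun p => val H p ⊔ val K p) hp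
  constructor
  · rintro M (rfl | rfl)
    · exact subset_of_gen hP hH (hull_mem _ _) fun p hp =>
        down (hull_mem _ _) (key p hp) le_rfl le_sup_left
    · exact subset_of_gen hP hK (hull_mem _ _) fun p hp =>
        down (hull_mem _ _) (key p hp) le_rfl le_sup_right
  · intro M hM
    have h1 : H ≤ M := hM (by simp)
    have h2 : K ≤ M := hM (by simp)
    exact hull_subset ht M.2 fun p _ => sup_right_mem M.2 (h1 (val_mem H p)) (h2 (val_mem K p))

lemma exists_common_gen (hS : (⊤ : S) ≠ ⊥) (A : Finset {H // H ∈ ltens S L}) :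
    ∃ P : Finset S, ⊤ ∈ P ∧ ⊥ ∉ P ∧ ∀ H ∈ A, Gen P H.1 := by
  classical
  choose Q hQ0 hQ using exists_gen (S := S) (L := L)
  refine ⟨insert ⊤ (A.biUnion Q), by simp, ?_, fun H hH => (hQ H).mono ?_⟩
  · simp only [Finset.mem_insert, Finset.mem_biUnion, not_or, not_exists, not_and]
    exact ⟨hS.symm, fun H _ => hQ0 H⟩
  · exact (Finset.subset_biUnion_of_mem Q hH).trans (Finset.subset_insert _ _)

lemma exists_isLUB (hS : (⊤ : S) ≠ ⊥) (H K : {H // H ∈ ltens S L}) : ∃ M, IsLUB {H, K} M := by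
  classical
  obtain ⟨P, ht, hP, hg⟩ := exists_common_gen hS {H, K}
  exact ⟨_, isLUB_hull ht hP (hg H (by simp)) (hg K (by simp))⟩

/-- The lattice structure on `S ⊠ L`, extending the order by inclusion. -/
noncomputable abbrev tensLattice (hS : (⊤ : S) ≠ ⊥) : Lattice {H // H ∈ ltens S L} where
  toPartialOrder := inferInstance
  sup H K := (exists_isLUB hS H K).choose
  inf H K := ⟨H.1 ∩ K.1, inter_mem H.2 K.2⟩
  le_sup_left H K := (exists_isLUB hS H K).choose_spec.1 (by simp)
  le_sup_right H K := (exists_isLUB hS H K).choose_spec.1 (by simp)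
  sup_le H K M h1 h2 := (exists_isLUB hS H K).choose_spec.2 (by rintro _ (rfl | rfl) <;> assumption)
  inf_le_left _ _ := Set.inter_subset_left
  inf_le_right _ _ := Set.inter_subset_right
  le_inf _ _ _ h1 h2 := Set.subset_inter h1 h2

/-! ### Extending a congruence of `L` -/

/-- The extension of `θ` to `S ⊠ L`: congruence of all values. -/
def extend (θ : L → L → Prop) (H K : {H // H ∈ ltens S L}) : Prop :=
  ∀ x, x ≠ ⊥ → θ (val H x) (val K x)

lemma posetLatCon_extend (hS : (⊤ : S) ≠ ⊥) {θ : L → L → Prop} (hθ : LatCon L θ) :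
    PosetLatCon (extend (S := S) θ) := by
  classical
  refine ⟨⟨fun H x _ => hθ.1.refl _, fun h x hx => hθ.1.symm (h x hx),
    fun h h' x hx => hθ.1.trans (h x hx) (h' x hx)⟩, ?_, ?_⟩
  · intro H H' K K' M M' h h' hM hM' x hx
    obtain ⟨P, ht, hP, hg⟩ := exists_common_gen hS {H, H', K, K'}
    rw [hM.unique (isLUB_hull ht hP (hg H (by simp)) (hg K (by simp))),
      hM'.unique (isLUB_hull ht hP (hg H' (by simp)) (hg K' (by simp)))]
    refine val_con hθ (I := P.powerset) (a := fun J => J.sup id) ⟨∅, by simp, by simp⟩ rfl rfl ?_ hx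
    intro J _
    refine con_sup' hθ _ fun p hp => ?_
    have hp0 : p ≠ ⊥ := by
      rintro rfl
      simp only [Finset.mem_insert, Finset.mem_sdiff] at hp
      exact hp.elim hS.symm fun h => hP h.1
    exact (hθ.2 _ _ _ _ (h p hp0) (h' p hp0)).1
  · intro H H' K K' M M' h h' hM hM' x hx
    let _ := tensLattice (L := L) hS
    have hv : ∀ H K : {H // H ∈ ltens S L}, val (H ⊓ K) x = val H x ⊓ val K x := fun H K =>
      val_eq _ hx fun y => by
        rw [le_inf_iff, ← mem_iff H hx, ← mem_iff K hx]
        rfl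
    rw [hM.unique isGLB_pair, hM'.unique isGLB_pair, hv, hv]
    have key := hθ.2 _ _ _ _ (h x hx) (h' x hx)
    exact key.2

/-- The map `j : L → S ⊠ L`, `x ↦ ⊥ □ x`. -/
def emb (x : L) : {H // H ∈ ltens S L} := ⟨boxe S L ⊥ x, boxe_mem x⟩

lemma mem_emb {x : L} {s : S} {y : L} : (s, y) ∈ (emb x : {H // H ∈ ltens S L}).1 ↔ s = ⊥ ∨ y ≤ x := by
  simp [emb, boxe]

lemma val_emb (x : L) {s : S} (hs : s ≠ ⊥) : val (emb x) s = x :=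
  val_eq _ hs fun y => by simp [mem_emb, hs]

lemma extend_emb (hS : (⊤ : S) ≠ ⊥) {θ : L → L → Prop} (x y : L) :
    extend (S := S) θ (emb x) (emb y) ↔ θ x y := by
  constructor
  · intro h
    simpa [val_emb _ hS] using h ⊤ hS
  · intro h s hs
    rwa [val_emb _ hs, val_emb _ hs]

/-! ### Uniqueness of the extension -/

/-- The element `(a □ b) ∩ (⊥ □ c)`: for `b ≤ c` its value is `c` at `⊥ ≠ x ≤ a` and `b` at
`x ≰ a`. -/
def step (b c : L) (a : S) : {H // H ∈ ltens S L} :=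
  ⟨boxe S L a b ∩ boxe S L ⊥ c, by
    classical
    exact mem_ltens_iff.2 ⟨{(a, b), (⊥, c)}, ⟨c, by simp⟩, by
      rw [Finset.set_biInter_insert, Finset.set_biInter_singleton]⟩⟩

lemma mem_step {b c : L} {a s : S} {y : L} :
    (s, y) ∈ (step b c a).1 ↔ (s ≤ a ∨ y ≤ b) ∧ (s = ⊥ ∨ y ≤ c) := by
  simp [step, boxe]

lemma step_le {b c : L} {a : S} {K : {H // H ∈ ltens S L}} (h1 : (a, c) ∈ K.1)
    (h2 : (⊤, b) ∈ K.1) : step b c a ≤ K := by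
  rintro ⟨s, y⟩ h
  rcases mem_step.1 h with ⟨h3, rfl | h4⟩
  · exact bot_mem K.2 y
  · rcases h3 with h3 | h3
    · exact down K.2 h1 h3 h4
    · exact down K.2 h2 le_top h3

lemma step_bot {b c : L} (h : b ≤ c) : step b c (⊥ : S) = emb b := by
  ext ⟨s, y⟩
  rw [mem_step, mem_emb, le_bot_iff]
  exact ⟨fun h => h.1, fun h' => ⟨h', h'.imp_right fun h' => h'.trans h⟩⟩

lemma step_top {b c : L} : step b c (⊤ : S) = emb c := by
  ext ⟨s, y⟩
  simp [mem_step, mem_emb]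

section Unique

variable (hS : (⊤ : S) ≠ ⊥)

lemma step_sup {b c : L} (h : b ≤ c) (a a' : S) :
    letI := tensLattice (L := L) hS
    step b c (a ⊔ a') = step b c a ⊔ step b c a' := by
  let _ := tensLattice (L := L) hS
  have hac : ∀ a : S, (a, c) ∈ (step b c a).1 := fun a => mem_step.2 ⟨Or.inl le_rfl, Or.inr le_rfl⟩
  have hb : ∀ a : S, (⊤, b) ∈ (step b c a).1 := fun a => mem_step.2 ⟨Or.inr le_rfl, Or.inr h⟩
  have h1 : step b c a ≤ step b c a ⊔ step b c a' := le_sup_left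
  have h2 : step b c a' ≤ step b c a ⊔ step b c a' := le_sup_right
  refine le_antisymm (step_le (sup_left_mem (Subtype.prop _) (h1 (hac a)) (h2 (hac a')))
    (h1 (hb a))) (sup_le (step_le ?_ (hb _)) (step_le ?_ (hb _)))
  · exact down (Subtype.prop _) (hac (a ⊔ a')) le_sup_left le_rfl
  · exact down (Subtype.prop _) (hac (a ⊔ a')) le_sup_right le_rfl

lemma step_inf {b c : L} (a a' : S) :
    letI := tensLattice (L := L) hS
    step b c (a ⊓ a') = step b c a ⊓ step b c a' := by
  let _ := tensLattice (L := L) hS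
  ext ⟨s, y⟩
  change _ ↔ (s, y) ∈ (step b c a).1 ∩ (step b c a').1
  rw [Set.mem_inter_iff, mem_step, mem_step, mem_step, le_inf_iff]
  tauto

/-- By simplicity of `S`, identifying two distinct values of `step b c` identifies its extreme
values. -/
lemma con_emb_of_step
    (hsimple : ∀ θ : S → S → Prop, LatCon S θ → (∀ a b : S, θ a b ↔ a = b) ∨ (∀ a b : S, θ a b))
    {Θ : {H // H ∈ ltens S L} → {H // H ∈ ltens S L} → Prop}
    (hΘ : @LatCon _ (tensLattice hS) Θ) {b c : L} (hbc : b ≤ c) {a a' : S} (ha : a ≠ a')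
    (h : Θ (step b c a) (step b c a')) : Θ (emb b) (emb c) := by
  let _ := tensLattice (L := L) hS
  have hcon : LatCon S fun a a' => Θ (step b c a) (step b c a') := by
    refine ⟨⟨fun _ => hΘ.1.refl _, fun h => hΘ.1.symm h, fun h h' => hΘ.1.trans h h'⟩, ?_⟩
    intro u v w z h1 h2
    simp only [step_sup hS hbc, step_inf hS]
    exact hΘ.2 _ _ _ _ h1 h2
  rw [← step_bot (S := S) hbc, ← step_top (S := S) (b := b) (c := c)]
  rcases hsimple _ hcon with h' | h'
  · exact absurd ((h' _ _).1 h) ha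
  · exact h' _ _

lemma con_of_subset_boxe
    (hsimple : ∀ θ : S → S → Prop, LatCon S θ → (∀ a b : S, θ a b ↔ a = b) ∨ (∀ a b : S, θ a b))
    {Θ : {H // H ∈ ltens S L} → {H // H ∈ ltens S L} → Prop}
    (hΘ : @LatCon _ (tensLattice hS) Θ) {H K : {H // H ∈ ltens S L}} (h : Θ H K) {x a : S} {b : L}
    (hxa : ¬ x ≤ a) (hH : H.1 ⊆ boxe S L a b) : Θ (emb (b ⊓ val K x)) (emb (val K x)) := by
  let _ := tensLattice (L := L) hS
  set c := val K x with hc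
  set d := b ⊓ c with hd
  have hdc : d ≤ c := inf_le_right
  refine con_emb_of_step hS hsimple hΘ hdc (a := a) (a' := a ⊔ x)
    (fun h => hxa (h ▸ le_sup_right)) ?_
  -- the lower value is taken below `val K ⊤` so that `X ≤ K`
  let X : {H // H ∈ ltens S L} := step (d ⊓ val K ⊤) c x
  have hXK : X ≤ K := step_le (val_mem K x) (down K.2 (val_mem K ⊤) le_rfl inf_le_right)
  have hXH : X ⊓ H ≤ step d c a := by
    rintro ⟨s, y⟩ ⟨h1, h2⟩
    have h3 := (mem_step.1 h1).2
    refine mem_step.2 ⟨?_, h3⟩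
    rcases hH h2 with h4 | h4
    · exact Or.inl h4
    · rcases h3 with rfl | h3
      · exact Or.inl bot_le
      · exact Or.inr (le_inf h4 h3)
  have hsup : step d c a ⊔ X = step d c (a ⊔ x) := by
    have h1 : step d c a ≤ step d c a ⊔ X := le_sup_left
    have h2 : X ≤ step d c a ⊔ X := le_sup_right
    refine le_antisymm (sup_le ?_ (step_le ?_ ?_)) (step_le (sup_left_mem (Subtype.prop _) ?_ ?_) ?_)
    · rw [step_sup hS hdc]
      exact le_sup_left
    · exact mem_step.2 ⟨Or.inl le_sup_right, Or.inr le_rfl⟩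
    · exact mem_step.2 ⟨Or.inr inf_le_left, Or.inr (inf_le_left.trans hdc)⟩
    · exact h1 (mem_step.2 ⟨Or.inl le_rfl, Or.inr le_rfl⟩)
    · exact h2 (mem_step.2 ⟨Or.inl le_rfl, Or.inr le_rfl⟩)
    · exact h1 (mem_step.2 ⟨Or.inr le_rfl, Or.inr hdc⟩)
  have h1 : Θ (X ⊓ H) (X ⊓ K) := (hΘ.2 _ _ _ _ (hΘ.1.refl X) h).2
  have h2 := (hΘ.2 _ _ _ _ (hΘ.1.refl (step d c a)) h1).1
  rwa [inf_eq_left.2 hXK, hsup, sup_eq_left.2 hXH] at h2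

lemma val_inf_con
    (hsimple : ∀ θ : S → S → Prop, LatCon S θ → (∀ a b : S, θ a b ↔ a = b) ∨ (∀ a b : S, θ a b))
    {Θ : {H // H ∈ ltens S L} → {H // H ∈ ltens S L} → Prop}
    (hΘ : @LatCon _ (tensLattice hS) Θ) {θ : L → L → Prop} (hθ : LatCon L θ)
    (hres : ∀ x y, Θ (emb x) (emb y) ↔ θ x y) {H K : {H // H ∈ ltens S L}} (h : Θ H K) {x : S}
    (hx : x ≠ ⊥) : θ (val H x ⊓ val K x) (val K x) := by
  classical
  obtain ⟨F, ⟨c, hc⟩, hF⟩ := mem_ltens_iff.1 H.2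
  obtain ⟨hne, hv⟩ := section_iInter (L := L) (I := F) (a := Prod.fst) hx ⟨_, hc, rfl⟩
  rw [val_eq H hx fun y => by rw [hF]; exact hv Prod.snd y]
  refine Finset.inf'_induction hne Prod.snd (p := fun v => θ (v ⊓ val K x) (val K x)) ?_ ?_
  · intro v hv w hw
    have := (hθ.2 _ _ _ _ hv hw).2
    rwa [← inf_inf_distrib_right, inf_idem] at this
  · intro i hi
    rw [Finset.mem_filter] at hi
    refine (hres _ _).1 (con_of_subset_boxe hS hsimple hΘ h hi.2 ?_)
    rw [hF]
    exact Set.biInter_subset_of_mem hi.1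

/-- A confined element is a finite join of elements `j (val H p) ⊓ step m C p`, where the bounds
`m` and `C` need only be small, respectively large, enough. -/
lemma eq_sup' {P : Finset S} (hne : P.Nonempty) (hP : ⊥ ∉ P) {H : {H // H ∈ ltens S L}}
    (hg : Gen P H.1) {m C : L} (hm : m ≤ val H ⊤) (hC : H.1 ⊆ boxe S L ⊥ C) :
    letI := tensLattice (L := L) hS
    H = P.sup' hne fun p => emb (val H p) ⊓ step m C p := by
  let _ := tensLattice (L := L) hS
  apply le_antisymm
  · refine subset_of_gen hP hg (Subtype.prop _) fun p hp => ?_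
    have h1 := Finset.le_sup' (fun p => emb (val H p) ⊓ step m C p) hp
    refine h1 ⟨mem_emb.2 (Or.inr le_rfl), mem_step.2 ⟨Or.inl le_rfl, ?_⟩⟩
    exact (hC (val_mem H p)).imp_left le_bot_iff.1
  · refine Finset.sup'_le _ _ fun p _ => ?_
    rintro ⟨s, y⟩ ⟨h1, h2⟩
    rcases mem_emb.1 h1 with rfl | h1
    · exact bot_mem H.2 y
    · rcases (mem_step.1 h2).1 with h2 | h2
      · exact down H.2 (val_mem H p) h2 h1
      · exact down H.2 (val_mem H ⊤) le_top (h2.trans hm)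

lemma exists_bound (H : {H // H ∈ ltens S L}) : ∃ c, H.1 ⊆ boxe S L ⊥ c := by
  obtain ⟨F, ⟨c, hc⟩, hF⟩ := mem_ltens_iff.1 H.2
  exact ⟨c, by rw [hF]; exact Set.biInter_subset_of_mem hc⟩

lemma boxe_mono {a : S} {b c : L} (h : b ≤ c) : boxe S L a b ⊆ boxe S L a c :=
  fun _ hp => hp.imp_right fun h' => h'.trans h

lemma con_of_val
    {Θ : {H // H ∈ ltens S L} → {H // H ∈ ltens S L} → Prop}
    (hΘ : @LatCon _ (tensLattice hS) Θ) {θ : L → L → Prop}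
    (hres : ∀ x y, Θ (emb x) (emb y) ↔ θ x y) {H K : {H // H ∈ ltens S L}}
    (h : extend θ H K) : Θ H K := by
  classical
  let _ := tensLattice (L := L) hS
  obtain ⟨P, ht, hP, hg⟩ := exists_common_gen hS {H, K}
  obtain ⟨c, hc⟩ := exists_bound H
  obtain ⟨c', hc'⟩ := exists_bound K
  have hHP := eq_sup' hS ⟨_, ht⟩ hP (hg H (by simp)) (m := val H ⊤ ⊓ val K ⊤) inf_le_left
    (hc.trans (boxe_mono (le_sup_left (b := c'))))
  have hKP := eq_sup' hS ⟨_, ht⟩ hP (hg K (by simp)) (m := val H ⊤ ⊓ val K ⊤) inf_le_right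
    (hc'.trans (boxe_mono (le_sup_right (a := c))))
  have key := con_sup' hΘ ⟨_, ht⟩
    (f := fun p => emb (val H p) ⊓ step (val H ⊤ ⊓ val K ⊤) (c ⊔ c') p)
    (g := fun p => emb (val K p) ⊓ step (val H ⊤ ⊓ val K ⊤) (c ⊔ c') p) fun p hp => ?_
  · rwa [← hHP, ← hKP] at key
  have hp0 : p ≠ ⊥ := fun h => hP (h ▸ hp)
  exact (hΘ.2 _ _ _ _ ((hres _ _).2 (h p hp0)) (hΘ.1.refl _)).2

end Unique

lemma eq_extend (hS : (⊤ : S) ≠ ⊥)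
    (hsimple : ∀ θ : S → S → Prop, LatCon S θ → (∀ a b : S, θ a b ↔ a = b) ∨ (∀ a b : S, θ a b))
    {Θ : {H // H ∈ ltens S L} → {H // H ∈ ltens S L} → Prop}
    (hΘ : PosetLatCon Θ) {θ : L → L → Prop} (hθ : LatCon L θ)
    (hres : ∀ x y, Θ (emb x) (emb y) ↔ θ x y) : Θ = extend θ := by
  have hΘ' : @LatCon _ (tensLattice hS) Θ :=
    (@posetLatCon_iff _ (tensLattice (L := L) hS) Θ).1 hΘ
  funext H K
  refine propext ⟨fun h x hx => ?_, con_of_val hS hΘ' hres⟩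
  have h1 := val_inf_con hS hsimple hΘ' hθ hres h hx
  have h2 := val_inf_con hS hsimple hΘ' hθ hres (hΘ.1.symm h) hx
  rw [inf_comm] at h2
  exact hθ.1.trans (hθ.1.symm h2) h1

end SimpleTensor

/-- For a simple bounded lattice `S` (exactly two lattice congruences) and a lattice
`L`, the map `j : x ↦ 0_S □ x` is an injective, congruence-preserving lattice
homomorphism (embedding) of `L` into `S ⊠ L`. -/
theorem simple_bounded_ltens_congruencePreserving
    (S L : Type*) [Lattice S] [OrderBot S] [OrderTop S] [Lattice L]
    (hnontriv : ∃ a b : S, a ≠ b)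
    (hsimple : ∀ θ : S → S → Prop, LatCon S θ →
      (∀ a b : S, θ a b ↔ a = b) ∨ (∀ a b : S, θ a b)) :
    (∀ x : L, boxe S L ⊥ x ∈ ltens S L) ∧
    Function.Injective (fun x : L => boxe S L ⊥ x) ∧
    (∀ x y : L,
      IsLeast {H | H ∈ ltens S L ∧ boxe S L ⊥ x ⊆ H ∧ boxe S L ⊥ y ⊆ H}
        (boxe S L ⊥ (x ⊔ y)) ∧
      IsGreatest {H | H ∈ ltens S L ∧ H ⊆ boxe S L ⊥ x ∧ H ⊆ boxe S L ⊥ y}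
        (boxe S L ⊥ (x ⊓ y))) ∧
    (∀ θ : L → L → Prop, LatCon L θ →
      ∃! Θ : {H // H ∈ ltens S L} → {H // H ∈ ltens S L} → Prop,
        PosetLatCon Θ ∧
        ∀ (x y : L) (hx : boxe S L ⊥ x ∈ ltens S L) (hy : boxe S L ⊥ y ∈ ltens S L),
          (Θ ⟨boxe S L ⊥ x, hx⟩ ⟨boxe S L ⊥ y, hy⟩ ↔ θ x y)) := by
  have hS : (⊤ : S) ≠ ⊥ := by
    intro h
    obtain ⟨a, b, hab⟩ := hnontriv
    have h' : ∀ a : S, a = ⊥ := fun a => le_bot_iff.1 (h ▸ le_top)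
    exact hab ((h' a).trans (h' b).symm)
  refine ⟨SimpleTensor.boxe_mem, fun x y hxy => ?_, fun x y => ⟨⟨⟨?_, ?_, ?_⟩, ?_⟩,
    ⟨⟨?_, ?_, ?_⟩, ?_⟩⟩, fun θ hθ => ?_⟩
  · have h : SimpleTensor.emb (S := S) x = SimpleTensor.emb y := Subtype.ext hxy
    rw [← SimpleTensor.val_emb x hS, h, SimpleTensor.val_emb y hS]
  · exact SimpleTensor.boxe_mem _
  · exact SimpleTensor.boxe_mono le_sup_left
  · exact SimpleTensor.boxe_mono le_sup_right
  · rintro K ⟨hK, h1, h2⟩ ⟨s, z⟩ (h | h)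
    · obtain rfl := le_bot_iff.1 h
      exact SimpleTensor.bot_mem hK z
    · exact SimpleTensor.down hK (SimpleTensor.sup_right_mem hK
        (h1 (Or.inr le_rfl : (s, x) ∈ boxe S L ⊥ x))
        (h2 (Or.inr le_rfl : (s, y) ∈ boxe S L ⊥ y))) le_rfl h
  · exact SimpleTensor.boxe_mem _
  · exact SimpleTensor.boxe_mono inf_le_left
  · exact SimpleTensor.boxe_mono inf_le_right
  · rintro K ⟨-, h1, h2⟩ z hz
    rcases h1 hz with h | h
    · exact Or.inl h
    · rcases h2 hz with h' | h'
      · exact Or.inl h'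
      · exact Or.inr (le_inf h h')
  · refine ⟨SimpleTensor.extend θ, ⟨SimpleTensor.posetLatCon_extend hS hθ,
      fun x y _ _ => SimpleTensor.extend_emb hS x y⟩, ?_⟩
    rintro Θ ⟨hΘ, hres⟩
    exact SimpleTensor.eq_extend hS hsimple hΘ hθ fun x y =>
      hres x y (SimpleTensor.boxe_mem x) (SimpleTensor.boxe_mem y)
end
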